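/- Let A be an infinite-dimensional unital simple C*-algebra, and let B ⊆ A be a centrally large subalgebra of A such that B has tracial topological rank zero. Then A has stable rank one (the invertible elements of A are dense in A) and real rank zero (the invertible self-adjoint elements of A are dense in the set of self-adjoint elements of A). -/

import Mathlib

open Filter

/-- `a` is Cuntz subequivalent to `b` in the C*-algebra `A`: there is a sequence
`(rₙ)` in `A` with `‖rₙ * b * rₙ* - a‖ → 0`. -/
def CuntzSubeq {A : Type*} [NonUnitalCStarAlgebra A] (a b : A) : Prop :=
  ∃ r : ℕ → A,
    Tendsto (fun n => ‖r n * b * star (r n) - a‖) atTop (nhds 0)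

/-- `a` is Cuntz subequivalent to `b` relative to the subset `S` of `A`: there
is a sequence `(rₙ)` in `S` with `‖rₙ * b * rₙ* - a‖ → 0`. -/
def CuntzSubeqIn {A : Type*} [NonUnitalCStarAlgebra A] (S : Set A) (a b : A) : Prop :=
  ∃ r : ℕ → A, (∀ n, r n ∈ S) ∧
    Tendsto (fun n => ‖r n * b * star (r n) - a‖) atTop (nhds 0)

/-- A projection in a C*-algebra: a self-adjoint idempotent. -/
def IsProjection {A : Type*} [NonUnitalCStarAlgebra A] (p : A) : Prop :=
  p = star p ∧ p = p * p

/-- A C*-algebra is simple if it has no closed two-sided ideals other than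
`⊥` and `⊤`. -/
def IsSimpleCStarAlgebra (A : Type*) [NonUnitalCStarAlgebra A] : Prop :=
  ∀ I : TwoSidedIdeal A, IsClosed (I : Set A) → I = ⊥ ∨ I = ⊤

/-- The unital subalgebra `B` is centrally large in `A` (Archey–Phillips). -/
def IsCentrallyLarge {A : Type*} [CStarAlgebra A] [PartialOrder A]
    [StarOrderedRing A] (B : StarSubalgebra ℂ A) : Prop :=
  ∀ (m : ℕ) (a : Fin m → A) (ε : ℝ), 0 < ε →
    ∀ x : A, 0 ≤ x → ‖x‖ = 1 → ∀ y ∈ B, 0 ≤ y → y ≠ 0 →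
    ∃ c : Fin m → A, ∃ g ∈ B,
      0 ≤ g ∧ g ≤ 1 ∧
      (∀ j, ‖c j - a j‖ < ε) ∧
      (∀ j, (1 - g) * c j ∈ B) ∧
      CuntzSubeqIn (B : Set A) g y ∧ CuntzSubeq g x ∧
      ‖(1 - g) * x * (1 - g)‖ > 1 - ε ∧
      (∀ j, ‖g * a j - a j * g‖ < ε)

/-- The closed unital subalgebra `B` of `A` has tracial topological rank zero
(Lin), all data being taken inside `B`. -/
def TracialTopRankZeroIn {A : Type*} [CStarAlgebra A] [PartialOrder A]
    [StarOrderedRing A] (B : StarSubalgebra ℂ A) : Prop :=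
  ∀ (ε : ℝ), 0 < ε → ∀ G : Finset A, (↑G : Set A) ⊆ (B : Set A) →
    ∀ a ∈ B, 0 ≤ a → a ≠ 0 →
    ∃ p ∈ B, IsProjection p ∧ p ≠ 0 ∧
    ∃ E : NonUnitalStarSubalgebra ℂ A, (E : Set A) ⊆ (B : Set A) ∧
      FiniteDimensional ℂ E ∧ p ∈ E ∧
      (∀ z ∈ E, p * z = z ∧ z * p = z) ∧
      (∀ x ∈ G, ‖p * x - x * p‖ < ε) ∧
      (∀ x ∈ G, ∃ d ∈ E, ‖p * x * p - d‖ < ε) ∧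
      CuntzSubeqIn (B : Set A) (1 - p) a

/-!
In `ℓ^∞(A) / c₀(A)` the hypotheses become exact. Central largeness cuts any `a ∈ A` down to
`(1 - G) a`, represented in `B`, with `G = N N*` commuting with `a` and `N` a sequence in `B k` for
a prescribed nonzero `k ∈ B`. Tracial rank zero then provides a projection `P`, commuting with the
cut-down elements, whose corner compresses them into sequences of finite-dimensional algebras, where
one-sided inverses are two-sided and invertible elements are dense; the complement `1 - P = S S*` is
again small.

A non-invertible `a` is close to an element annihilated by a nonzero element of `B`, and hence, up
to a unitary factor, to one with `r a = 0 = a r` for a nonzero projection `r ∈ B`. (Passing from one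
side to two uses that `r u ≠ 0` for every isometry `u`, which finite-dimensionality of the corners
forces.) For such an `a`, choose `N` and `S` to factor through orthogonal elements of `r A r`, and a
projection `q ≤ P` orthogonal to `r` on which `G` is small. The corner `q a q` is approximated by an
invertible of the corner, while `1 - q - r = y y*` with `y* y ≤ r`. The dilation
`U = r - y* y + y + y*` is a self-adjoint unitary of the corner at `1 - q`, and an arbitrarily small
multiple of it makes the whole perturbation of `a` invertible, because the corner of `U` at
`1 - q - r` vanishes.
-/

section Ring

theorem finite_spectrum_of_isIntegral {K R : Type*} [Field K] [Ring R] [Algebra K R] {x : R}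
    (hx : IsIntegral K x) : (spectrum K x).Finite := by
  rcases subsingleton_or_nontrivial R
  · simp only [spectrum.of_subsingleton, Set.finite_empty]
  obtain ⟨P, hP, hPx⟩ := hx
  refine (P.rootSet_finite K).subset fun z hz => ?_
  have hz' : P.eval z ∈ spectrum K (Polynomial.aeval x P) :=
    spectrum.subset_polynomial_aeval x P ⟨z, hz, rfl⟩
  rw [Polynomial.aeval_def, hPx] at hz'
  exact Polynomial.mem_rootSet.2 ⟨hP.ne_zero, by simpa using hz'⟩

theorem exists_isUnit_add_smul_one {R : Type*} [Ring R] [Algebra ℂ R] {x : R}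
    (hx : (spectrum ℂ x).Finite) {η : ℝ} (hη : 0 < η) :
    ∃ t : ℝ, 0 < t ∧ t < η ∧ IsUnit (x + (t : ℂ) • (1 : R)) := by
  have hpre : ((fun t : ℝ => -(t : ℂ)) ⁻¹' spectrum ℂ x).Finite :=
    hx.preimage fun a _ b _ h => by simpa using h
  obtain ⟨t, ht, htx⟩ := (Set.Ioo_infinite hη).exists_notMem_finite hpre
  refine ⟨t, ht.1, ht.2, ?_⟩
  convert (spectrum.notMem_iff.1 htx).neg using 1
  rw [Algebra.algebraMap_eq_smul_one, neg_smul]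
  abel

theorem mul_eq_zero_of_orthogonal {R : Type*} [Semiring R] {e f x y : R} (hx : x * e = x)
    (hy : f * y = y) (hef : e * f = 0) : x * y = 0 := by
  rw [← hx, ← hy, mul_assoc, ← mul_assoc e, hef, zero_mul, mul_zero]

theorem commute_pinching {R : Type*} [Ring R] {p : R} (hp : IsIdempotentElem p) (x : R) :
    Commute p (p * x * p + (1 - p) * x * (1 - p)) := by
  have h₁ : p * (p * x * p + (1 - p) * x * (1 - p)) = p * x * p := by
    rw [mul_add, mul_assoc (1 - p), ← mul_assoc p (1 - p), hp.mul_one_sub_self, zero_mul, add_zero,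
      ← mul_assoc, ← mul_assoc, hp.eq]
  have h₂ : (p * x * p + (1 - p) * x * (1 - p)) * p = p * x * p := by
    rw [add_mul, mul_assoc _ (1 - p), hp.one_sub_mul_self, mul_zero, add_zero, mul_assoc _ p, hp.eq]
  exact h₁.trans h₂.symm

theorem pinching_eq_of_commute {R : Type*} [Ring R] {p x : R} (hp : IsIdempotentElem p)
    (hpx : Commute p x) : p * x * p + (1 - p) * x * (1 - p) = x := by
  rw [mul_assoc, ← hpx.eq, ← mul_assoc, hp.eq, mul_assoc, ← ((Commute.one_left x).sub_left hpx).eq,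
    ← mul_assoc, hp.one_sub.eq, ← add_mul, add_sub_cancel, one_mul]

theorem isUnit_one_add_of_mul_self_eq_zero {R : Type*} [Ring R] {x : R} (hx : x * x = 0) :
    IsUnit (1 + x) :=
  IsNilpotent.isUnit_one_add ⟨2, by rw [sq, hx]⟩

/-- With respect to `r + s`, the factor is the block matrix `[[r - y'y, y'], [y, 0]]`. -/
theorem coisometry_dilation_mul_self {R : Type*} [Ring R] {r s y y' : R} (hrs : r * s = 0)
    (hsr : s * r = 0) (hr : r * r = r) (hsy : s * y = y) (hyr : y * r = y) (hry' : r * y' = y')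
    (hy's : y' * s = y') (hyy' : y * y' = s) :
    (r - y' * y + y + y') * (r - y' * y + y + y') = r + s := by
  have hry : r * y = 0 := mul_eq_zero_of_orthogonal hr hsy hrs
  have hy'r : y' * r = 0 := mul_eq_zero_of_orthogonal hy's hr hsr
  have hyy : y * y = 0 := mul_eq_zero_of_orthogonal hyr hsy hrs
  have hy'y' : y' * y' = 0 := mul_eq_zero_of_orthogonal hy's hry' hsr
  have hy'yy' : y' * y * y' = y' := by rw [mul_assoc, hyy', hy's]
  have hyy'y : y * (y' * y) = y := by rw [← mul_assoc, hyy', hsy]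
  have key : (r - y' * y) * (r - y' * y) = r - y' * y := by
    simp only [sub_mul, mul_sub, hr, ← mul_assoc, hry', hy'yy']
    rw [mul_assoc, hyr]; abel
  simp only [mul_add, add_mul, key]
  simp only [sub_mul, mul_sub, hry, hyr, hry', hyy', hy'yy', hyy'y, hy'r, hyy, hy'y',
    ← mul_assoc y' y']
  simp only [mul_assoc y' y y, hyy, mul_zero, zero_mul]
  abel

/-- With respect to `q + (1 - q)` this is the block matrix `[[d, b], [c, u + z]]`. Eliminating `b`
and `c` leaves `u + z'` with `z' = z - c d' b`, and `u' z'` squares to zero because `s u' s = 0`. -/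
theorem isUnit_of_compression_inv_eq_zero {R : Type*} [Ring R] {q s d d' u u' b c z : R}
    (hqs : q * s = 0) (hsq : s * q = 0) (hqd : q * d = d) (hdq : d * q = d)
    (hqd' : q * d' = d') (hd'q : d' * q = d') (hdd' : d * d' = q) (hd'd : d' * d = q)
    (hqu : q * u = 0) (huq : u * q = 0) (hqu' : q * u' = 0) (hu'q : u' * q = 0)
    (huu' : u * u' = 1 - q) (hu'u : u' * u = 1 - q) (hsu's : s * u' * s = 0)
    (hqb : q * b = b) (hbs : b * s = b) (hsc : s * c = c) (hcq : c * q = c)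
    (hsz : s * z = z) (hzs : z * s = z) : IsUnit (d + u + b + c + z) := by
  set z' := z - c * d' * b
  have hsz' : s * z' = z' := by simp only [z', mul_sub, hsz, ← mul_assoc, hsc]
  have hz's : z' * s = z' := by simp only [z', sub_mul, hzs, mul_assoc, hbs]
  have hd'u : d' * u = 0 := by rw [← hd'q, mul_assoc, hqu, mul_zero]
  have hud' : u * d' = 0 := by rw [← hqd', ← mul_assoc, huq, zero_mul]
  have hdu' : d * u' = 0 := by rw [← hdq, mul_assoc, hqu', mul_zero]
  have hu'd : u' * d = 0 := by rw [← hqd, ← mul_assoc, hu'q, zero_mul]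
  have hx₀ : IsUnit (d + u) := isUnit_iff_exists.2 ⟨d' + u',
    by simp only [add_mul, mul_add, hdd', hdu', hud', huu']; abel,
    by simp only [add_mul, mul_add, hd'd, hd'u, hu'd, hu'u]; abel⟩
  have hc : IsUnit (1 + c * d') := isUnit_one_add_of_mul_self_eq_zero <|
    mul_eq_zero_of_orthogonal (by rw [mul_assoc, hd'q]) (by rw [← mul_assoc, hsc]) hqs
  have hb : IsUnit (1 + d' * b) := isUnit_one_add_of_mul_self_eq_zero <|
    mul_eq_zero_of_orthogonal (by rw [mul_assoc, hbs]) (by rw [← mul_assoc, hqd']) hsq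
  have hz : IsUnit (1 + u' * z') := by
    refine isUnit_one_add_of_mul_self_eq_zero ?_
    calc u' * z' * (u' * z') = u' * (z' * s) * (u' * (s * z')) := by rw [hsz', hz's]
      _ = u' * z' * (s * u' * s) * z' := by simp only [mul_assoc]
      _ = 0 := by rw [hsu's, mul_zero, zero_mul]
  have huz' : (d + u) * (u' * z') = z' := by
    rw [add_mul, ← mul_assoc, hdu', ← mul_assoc, huu', sub_mul, one_mul, ← hsz',
      ← mul_assoc q, hqs, zero_mul, zero_mul, zero_add, sub_zero]
  have hcx : (1 + c * d') * (d + u + z') = d + u + c + z' := by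
    simp only [add_mul, mul_add, one_mul, mul_assoc, hd'd, hd'u, hcq,
      mul_eq_zero_of_orthogonal hd'q hsz' hqs, mul_zero]
    abel
  have hxb : (d + u + c + z') * (1 + d' * b) = d + u + b + c + z := by
    simp only [add_mul, mul_add, mul_one, ← mul_assoc, hdd', hud', hqb,
      mul_eq_zero_of_orthogonal hz's hqd' hsq, zero_mul, z']
    abel
  have := (hc.mul (hx₀.mul hz)).mul hb
  rwa [mul_add (d + u), mul_one, huz', hcx, hxb] at this

theorem isUnit_of_corner_coisometry {R : Type*} [Ring R] [Algebra ℂ R] {q r s d d' y y' b c z : R}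
    (hqr : q * r = 0) (hrq : r * q = 0) (hqs : q * s = 0) (hsq : s * q = 0)
    (hrs : r * s = 0) (hsr : s * r = 0) (hr : r * r = r) (hsum : q + r + s = 1)
    (hqd : q * d = d) (hdq : d * q = d) (hqd' : q * d' = d') (hd'q : d' * q = d')
    (hdd' : d * d' = q) (hd'd : d' * d = q)
    (hsy : s * y = y) (hyr : y * r = y) (hry' : r * y' = y') (hy's : y' * s = y')
    (hyy' : y * y' = s) (hqb : q * b = b) (hbs : b * s = b) (hsc : s * c = c) (hcq : c * q = c)
    (hsz : s * z = z) (hzs : z * s = z) {ε : ℂ} (hε : ε ≠ 0) :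
    IsUnit (d + ε • (r - y' * y + y + y') + b + c + z) := by
  set U := r - y' * y + y + y'
  have hUU : U * U = 1 - q := by
    rw [coisometry_dilation_mul_self hrs hsr hr hsy hyr hry' hy's hyy', ← hsum]; abel
  have hqy' : q * y' = 0 := by rw [← hry', ← mul_assoc, hqr, zero_mul]
  have hyq : y * q = 0 := by rw [← hyr, mul_assoc, hrq, mul_zero]
  have hqy : q * y = 0 := by rw [← hsy, ← mul_assoc, hqs, zero_mul]
  have hy'q : y' * q = 0 := by rw [← hy's, mul_assoc, hsq, mul_zero]
  have hqU : q * U = 0 := by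
    simp only [U, mul_add, mul_sub, ← mul_assoc, hqr, hqy, hqy', zero_mul, add_zero, sub_zero]
  have hUq : U * q = 0 := by
    simp only [U, add_mul, sub_mul, mul_assoc, hrq, hyq, hy'q, mul_zero, add_zero, sub_zero]
  have hsUs : s * U * s = 0 := by
    have hsy' : s * y' = 0 := by rw [← hry', ← mul_assoc, hsr, zero_mul]
    have hys : y * s = 0 := by rw [← hyr, mul_assoc, hrs, mul_zero]
    simp only [U, mul_add, mul_sub, ← mul_assoc, hsr, hsy', hsy, zero_mul, hys, add_zero, sub_zero,
      zero_add]
  refine isUnit_of_compression_inv_eq_zero (u' := ε⁻¹ • U) hqs hsq hqd hdq hqd' hd'q hdd' hd'd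
    ?_ ?_ ?_ ?_ ?_ ?_ ?_ hqb hbs hsc hcq hsz hzs <;>
  simp only [mul_smul_comm, smul_mul_assoc, hqU, hUq, hUU, hsUs, smul_zero, smul_smul,
    mul_inv_cancel₀ hε, inv_mul_cancel₀ hε, one_smul]

end Ring

section FiniteDimensional

variable {A : Type*} [CStarAlgebra A]

theorem finite_spectrum_of_mem (E : StarSubalgebra ℂ A) [FiniteDimensional ℂ E] {x : A}
    (hx : x ∈ E) : (spectrum ℂ x).Finite :=
  finite_spectrum_of_isIntegral <| (Algebra.IsIntegral.isIntegral (⟨x, hx⟩ : E)).map E.subtype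

theorem finite_real_spectrum_of_mem (E : StarSubalgebra ℂ A) [FiniteDimensional ℂ E] {x : A}
    (hx : x ∈ E) : (spectrum ℝ x).Finite := by
  rw [← spectrum.preimage_algebraMap (S := ℂ)]
  exact (finite_spectrum_of_mem E hx).preimage (algebraMap ℝ ℂ).injective.injOn

theorem isClosed_of_finiteDimensional (E : StarSubalgebra ℂ A) [h : FiniteDimensional ℂ E] :
    IsClosed (E : Set A) :=
  have : FiniteDimensional ℂ (Subalgebra.toSubmodule E.toSubalgebra) := h
  Submodule.closed_of_finiteDimensional (Subalgebra.toSubmodule E.toSubalgebra)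

theorem val_inv_mem_of_isClosed {B : StarSubalgebra ℂ A} (hB : IsClosed (B : Set A)) {u : Aˣ}
    (hu : (u : A) ∈ B) : (↑u⁻¹ : A) ∈ B := by
  obtain ⟨v, hv⟩ := (StarSubalgebra.coe_isUnit B (a := ⟨u, hu⟩)).1 u.isUnit
  have huv : (u : A) * ((↑v⁻¹ : B) : A) = 1 := by
    have := congrArg (Subtype.val) v.mul_inv
    rwa [hv] at this
  rw [Units.inv_eq_of_mul_eq_one_right huv]
  exact (↑v⁻¹ : B).2

theorem isUnit_of_isUnit_mul_of_mem (E : StarSubalgebra ℂ A) [FiniteDimensional ℂ E] {x y : A}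
    (hx : x ∈ E) (hxy : IsUnit (x * y)) : IsUnit x := by
  obtain ⟨w, hw⟩ := hxy
  have hxw : x * (y * ↑w⁻¹) = 1 := by rw [← mul_assoc, ← hw, w.mul_inv]
  have hinj : Function.Injective (LinearMap.mulRight ℂ (⟨x, hx⟩ : E)) := fun a b hab => by
    have hab' : (a : A) * x = b * x := congrArg Subtype.val hab
    ext
    rw [← mul_one (a : A), ← hxw, ← mul_assoc, hab', mul_assoc, hxw, mul_one]
  obtain ⟨a, ha⟩ := LinearMap.surjective_of_injective hinj 1
  exact isUnit_iff_exists.2 ⟨_, hxw, by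
    rw [← left_inv_eq_right_inv (congrArg Subtype.val ha : (a : A) * x = 1) hxw]
    exact congrArg Subtype.val ha⟩

theorem norm_mul_sub_one_comm_le (E : StarSubalgebra ℂ A) [FiniteDimensional ℂ E] {x y : A}
    (hx : x ∈ E) (hxy : ‖x * y - 1‖ ≤ 1 / 2) :
    ‖y * x - 1‖ ≤ 2 * ‖y‖ * ‖x * y - 1‖ * ‖x‖ := by
  obtain ⟨w, hw⟩ : IsUnit (x * y) := by
    simpa using isUnit_one_sub_of_norm_lt_one (x := 1 - x * y)
      (by rw [norm_sub_rev]; exact hxy.trans_lt (by norm_num))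
  obtain ⟨u, rfl⟩ := isUnit_of_isUnit_mul_of_mem E hx ⟨w, hw⟩
  have hinv : ‖(↑u⁻¹ : A)‖ ≤ 2 * ‖y‖ := by
    have := norm_le_norm_add_norm_sub' (↑u⁻¹ : A) y
    have h2 : ‖(↑u⁻¹ : A) - y‖ ≤ ‖(↑u⁻¹ : A)‖ * (1 / 2) := by
      rw [show (↑u⁻¹ : A) - y = -(↑u⁻¹ * (u * y - 1)) by
        rw [mul_sub, Units.inv_mul_cancel_left, mul_one, neg_sub], norm_neg]
      exact norm_mul_le_of_le le_rfl hxy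
    linarith
  calc ‖y * u - 1‖ = ‖(↑u⁻¹ : A) * (u * y - 1) * u‖ := by
        rw [mul_sub, Units.inv_mul_cancel_left, mul_one, sub_mul, Units.inv_mul]
    _ ≤ 2 * ‖y‖ * ‖(u : A) * y - 1‖ * ‖(u : A)‖ :=
        norm_mul_le_of_le (norm_mul_le_of_le hinv le_rfl) le_rfl

theorem exists_units_eq_cfc {a : A} {f : ℝ → ℝ} (hf : ContinuousOn f (spectrum ℝ a))
    {η : ℝ} (hη : 0 < η) (hηf : ∀ x ∈ spectrum ℝ a, η ≤ |f x|)
    (ha : IsSelfAdjoint a := by cfc_tac) :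
    ∃ w : Aˣ, (w : A) = cfc f a ∧ ‖(↑w⁻¹ : A)‖ ≤ η⁻¹ := by
  refine ⟨cfcUnits f a (fun x hx => abs_pos.1 (hη.trans_le (hηf x hx))), rfl,
    norm_cfc_le (inv_nonneg.2 hη.le) fun x hx => ?_⟩
  rw [norm_inv]
  exact inv_anti₀ hη (hηf x hx)

theorem exists_isSelfAdjoint_unit_near (E : StarSubalgebra ℂ A) [FiniteDimensional ℂ E] {d : A}
    (hd : d ∈ E) (hsa : IsSelfAdjoint d) {η : ℝ} (hη : 0 < η) :
    ∃ u : Aˣ, IsSelfAdjoint (u : A) ∧ ‖(u : A) - d‖ ≤ 2 * η ∧ ‖(↑u⁻¹ : A)‖ ≤ η⁻¹ ∧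
      ∀ q, Commute q d → Commute q (u : A) := by
  have hC : ∀ f : ℝ → ℝ, ContinuousOn f (spectrum ℝ d) :=
    (finite_real_spectrum_of_mem E hd).continuousOn
  set f : ℝ → ℝ := fun x => if |x| ≤ η then η else x
  obtain ⟨u, hu, hu'⟩ := exists_units_eq_cfc (hC f) hη (fun x _ => by
    by_cases h : |x| ≤ η
    · simp only [f, if_pos h, le_abs_self]
    · simp only [f, if_neg h]; exact (not_le.1 h).le)
  refine ⟨u, hu ▸ cfc_predicate f d, ?_, hu', fun q hq => ?_⟩
  · have hsub : (u : A) - d = cfc (fun x => f x - x) d := by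
      rw [cfc_sub f (fun x => x) d (hC _) (hC _), cfc_id' ℝ d, hu]
    rw [hsub]
    refine norm_cfc_le (by positivity) fun x _ => ?_
    by_cases h : |x| ≤ η
    · simp only [f, if_pos h]
      exact (norm_sub_le _ _).trans (by rw [Real.norm_of_nonneg hη.le, Real.norm_eq_abs]; linarith)
    · simp only [f, if_neg h, sub_self, norm_zero]; positivity
  · rw [hu]; exact (hsa.commute_cfc hq.symm f).symm

theorem isStarProjection_cfc {f : ℝ → ℝ} {a : A} (hf : ContinuousOn f (spectrum ℝ a))
    (hff : ∀ x ∈ spectrum ℝ a, f x * f x = f x) : IsStarProjection (cfc f a) where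
  isIdempotentElem := (cfc_mul f f a hf hf).symm.trans (cfc_congr hff)
  isSelfAdjoint := cfc_predicate f a

theorem exists_isStarProjection_near (E : StarSubalgebra ℂ A) [FiniteDimensional ℂ E] {h : A}
    (hh : h ∈ E) (hsa : IsSelfAdjoint h) :
    ∃ p ∈ E, IsStarProjection p ∧ ‖p - h‖ ≤ 2 * ‖h * h - h‖ := by
  have := isClosed_of_finiteDimensional E
  have hC : ∀ f : ℝ → ℝ, ContinuousOn f (spectrum ℝ h) :=
    (finite_real_spectrum_of_mem E hh).continuousOn
  set χ : ℝ → ℝ := fun x => if 1 / 2 ≤ x then 1 else 0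
  have hid := cfc_id' ℝ h
  refine ⟨cfc χ h, cfc_mem _ hh, isStarProjection_cfc (hC χ) fun x _ => ?_, ?_⟩
  · by_cases hx : 1 / 2 ≤ x <;> simp only [χ, hx, if_true, if_false, mul_one, mul_zero]
  · have hsub : cfc χ h - h = cfc (fun x => χ x - x) h := by
      rw [cfc_sub χ (fun x => x) h (hC _) (hC _), hid]
    have hsq : h * h - h = cfc (fun x : ℝ => x * x - x) h := by
      rw [cfc_sub (fun x => x * x) (fun x => x) h (hC _) (hC _),
        cfc_mul (fun x => x) (fun x => x) h (hC _) (hC _), hid]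
    rw [hsub, hsq]
    refine norm_cfc_le (by positivity) fun x hx => ?_
    refine le_trans ?_ (mul_le_mul_of_nonneg_left
      (norm_apply_le_norm_cfc (fun x : ℝ => x * x - x) h hx (hC _)) zero_le_two)
    rw [Real.norm_eq_abs, Real.norm_eq_abs, show x * x - x = x * (x - 1) by ring, abs_mul]
    by_cases hx2 : 1 / 2 ≤ x
    · simp only [χ, if_pos hx2]
      rw [abs_sub_comm, abs_of_nonneg (by linarith : 0 ≤ x)]
      nlinarith [abs_nonneg (x - 1)]
    · simp only [χ, if_neg hx2]
      rw [zero_sub, abs_neg, abs_of_neg (by linarith : x - 1 < 0)]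
      nlinarith [abs_nonneg x]

variable [PartialOrder A] [StarOrderedRing A]

theorem exists_units_eq_abs {d : A} (hd : IsUnit d) :
    ∃ w : Aˣ, (w : A) = CFC.abs d ∧ d * ↑w⁻¹ ∈ unitary A := by
  obtain ⟨w, hw⟩ : IsUnit (CFC.abs d) := isUnit_pow_iff two_ne_zero |>.1 (by
    rw [sq, CFC.abs_mul_abs]; exact hd.star.mul hd)
  refine ⟨w, hw, ?_⟩
  have hws : star w = w := Units.ext (by
    rw [Units.coe_star, hw]; exact (CFC.abs_nonneg d).isSelfAdjoint)
  have hinv : star (↑w⁻¹ : A) = ↑w⁻¹ := by rw [← Units.coe_star_inv, hws]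
  have hvv : star (d * ↑w⁻¹) * (d * ↑w⁻¹) = 1 := by
    calc star (d * ↑w⁻¹) * (d * ↑w⁻¹) = ↑w⁻¹ * (star d * d) * ↑w⁻¹ := by
          simp only [star_mul, hinv, mul_assoc]
      _ = 1 := by rw [← CFC.abs_mul_abs, ← hw]; simp
  obtain ⟨x, hx⟩ : IsUnit (d * ↑w⁻¹) := hd.mul w⁻¹.isUnit
  refine ⟨hvv, ?_⟩
  rw [← hx] at hvv ⊢
  rw [Units.mul_eq_one_iff_eq_inv.1 hvv, Units.mul_inv]

theorem abs_mem_of_isClosed {B : StarSubalgebra ℂ A} (hB : IsClosed (B : Set A)) {d : A}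
    (hd : d ∈ B) : CFC.abs d ∈ B := by
  rw [CFC.abs, CFC.sqrt_eq_real_sqrt _ (star_mul_self_nonneg d), cfcₙ_eq_cfc]
  exact cfc_mem _ (mul_mem (star_mem hd) hd)

theorem exists_unitary_mul_nonneg (E : StarSubalgebra ℂ A)
    [FiniteDimensional ℂ E] {d : A} (hd : d ∈ E) {η : ℝ} (hη : 0 < η) :
    ∃ v ∈ E, ∃ t ∈ E, v ∈ unitary A ∧ 0 ≤ t ∧ ‖v * t - d‖ ≤ η := by
  obtain ⟨l, hl0, hlη, hu⟩ := exists_isUnit_add_smul_one (finite_spectrum_of_mem E hd) hη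
  obtain ⟨w, hw, hv⟩ := exists_units_eq_abs hu
  set d' := d + (l : ℂ) • (1 : A)
  have hd'E : d' ∈ E := add_mem hd (SMulMemClass.smul_mem _ (one_mem _))
  have hE := isClosed_of_finiteDimensional E
  have habs := abs_mem_of_isClosed hE hd'E
  refine ⟨d' * ↑w⁻¹, mul_mem hd'E (val_inv_mem_of_isClosed hE (hw ▸ habs)), CFC.abs d', habs, hv,
    CFC.abs_nonneg d', ?_⟩
  rw [← hw, Units.inv_mul_cancel_right, add_sub_cancel_left, norm_smul, Complex.norm_real,
    Real.norm_of_nonneg hl0.le]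
  exact (mul_le_of_le_one_right hl0.le (IsStarProjection.norm_le 1 (.one A))).trans hlη.le

theorem exists_commuting_unit_near (E : StarSubalgebra ℂ A) [FiniteDimensional ℂ E] {d : A}
    (hd : d ∈ E) {η : ℝ} (hη : 0 < η) :
    ∃ u : Aˣ, ‖(u : A) - d‖ ≤ 2 * η ∧ ‖(↑u⁻¹ : A)‖ ≤ η⁻¹ ∧
      ∀ q, IsSelfAdjoint q → Commute q d → Commute q (u : A) := by
  obtain ⟨l, hl0, hlη, hu⟩ := exists_isUnit_add_smul_one (finite_spectrum_of_mem E hd) hη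
  obtain ⟨w, hw, hv⟩ := exists_units_eq_abs hu
  set d' := d + (l : ℂ) • (1 : A)
  have hT : 0 ≤ CFC.abs d' := CFC.abs_nonneg d'
  obtain ⟨z, hz, hz'⟩ := exists_units_eq_cfc (a := CFC.abs d') (f := fun x => x + η)
    (by fun_prop) hη
    (fun x hx => by
      have := spectrum_nonneg_of_nonneg hT hx
      rw [abs_of_nonneg (by positivity)]; linarith) hT.isSelfAdjoint
  have h1 : ‖(1 : A)‖ ≤ 1 := IsStarProjection.norm_le 1 (.one A)
  have hsub : d' * ↑w⁻¹ * z - d = (l : ℂ) • 1 + (η : ℂ) • (d' * ↑w⁻¹) := by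
    rw [hz, cfc_add_const η (fun x => x) (CFC.abs d'), cfc_id' ℝ (CFC.abs d'), mul_add, ← hw,
      Units.inv_mul_cancel_right, ← Algebra.commutes, ← Algebra.smul_def, Complex.coe_smul η]
    simp only [d']
    abel
  refine ⟨Unitary.toUnits ⟨_, hv⟩ * z, ?_, ?_, fun q hq hqd => ?_⟩
  · refine (congrArg norm hsub).trans_le ((norm_add_le _ _).trans ?_)
    rw [norm_smul, norm_smul, Complex.norm_real, Complex.norm_real, Real.norm_of_nonneg hl0.le,
      Real.norm_of_nonneg hη.le]
    have hv1 : ‖d' * (↑w⁻¹ : A)‖ ≤ 1 := by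
      rw [← mul_one (d' * (↑w⁻¹ : A)), CStarRing.norm_mem_unitary_mul 1 hv]; exact h1
    nlinarith
  · rw [mul_inv_rev, Units.val_mul]
    refine (CStarRing.norm_mul_mem_unitary _ (Unitary.star_mem hv)).trans_le hz'
  · have hqd' : Commute q d' := hqd.add_right ((Commute.one_right q).smul_right _)
    have hqabs : Commute q (CFC.abs d') :=
      hqd'.symm.cfcAbs_right (by rw [hq.star_eq]; exact hqd'.symm)
    exact (hqd'.mul_right (hw ▸ hqabs).units_inv_right).mul_right
      (hz ▸ (hT.isSelfAdjoint.commute_cfc hqabs.symm _).symm)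

theorem exists_unit_near (E : StarSubalgebra ℂ A) [FiniteDimensional ℂ E] {d : A}
    (hd : d ∈ E) {η : ℝ} (hη : 0 < η) :
    ∃ u : Aˣ, ‖(u : A) - d‖ ≤ 2 * η ∧ ‖(↑u⁻¹ : A)‖ ≤ η⁻¹ ∧
      (IsSelfAdjoint d → IsSelfAdjoint (u : A)) ∧
      ∀ q, IsSelfAdjoint q → Commute q d → Commute q (u : A) := by
  by_cases hsa : IsSelfAdjoint d
  · obtain ⟨u, husa, hu, hu', hq⟩ := exists_isSelfAdjoint_unit_near E hd hsa hη
    exact ⟨u, hu, hu', fun _ => husa, fun q _ => hq q⟩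
  · obtain ⟨u, hu, hu', hq⟩ := exists_commuting_unit_near E hd hη
    exact ⟨u, hu, hu', fun h => (hsa h).elim, hq⟩

theorem exists_nonneg_near (E : StarSubalgebra ℂ A) [FiniteDimensional ℂ E] {h k : A}
    (hh : h ∈ E) (hsa : IsSelfAdjoint h) (hk : 0 ≤ k) :
    ∃ t ∈ E, 0 ≤ t ∧ ‖t - h‖ ≤ ‖h - k‖ := by
  have := isClosed_of_finiteDimensional E
  have hlow : algebraMap ℝ A (-‖h - k‖) ≤ h := by
    rw [map_neg]
    exact (hsa.sub hk.isSelfAdjoint).neg_algebraMap_norm_le_self.trans (sub_le_self h hk)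
  refine ⟨cfc (fun x : ℝ => max x 0) h, cfc_mem _ hh, cfc_nonneg fun x _ => le_max_right _ _, ?_⟩
  have hsub : cfc (fun x : ℝ => max x 0) h - h = cfc (fun x : ℝ => max x 0 - x) h := by
    rw [cfc_sub (fun x : ℝ => max x 0) (fun x => x) h, cfc_id' ℝ h]
  rw [hsub]
  refine norm_cfc_le (norm_nonneg _) fun x hx => ?_
  have hx' := (algebraMap_le_iff_le_spectrum (a := h)).1 hlow x hx
  rcases le_total 0 x with h0 | h0
  · simp only [max_eq_left h0, sub_self, norm_zero, norm_nonneg]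
  · rw [max_eq_right h0, zero_sub, norm_neg, Real.norm_of_nonpos h0]
    linarith

theorem exists_spectral_cutoff (E : StarSubalgebra ℂ A) [FiniteDimensional ℂ E] {T : A}
    (hT : T ∈ E) (hT0 : 0 ≤ T) {t : ℝ} (ht : 0 < t) :
    ∃ f ∈ E, ∃ κ ∈ E, IsStarProjection f ∧ IsSelfAdjoint κ ∧ κ * T * κ = f ∧ T * κ = κ * T ∧
      ‖κ‖ ≤ (√t)⁻¹ ∧ ‖T - f * T‖ ≤ t := by
  have := isClosed_of_finiteDimensional E
  have hC : ∀ f : ℝ → ℝ, ContinuousOn f (spectrum ℝ T) :=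
    (finite_real_spectrum_of_mem E hT).continuousOn
  have hid : cfc (fun x : ℝ => x) T = T := cfc_id' ℝ T
  set χ : ℝ → ℝ := fun x => if t ≤ x then 1 else 0
  set K : ℝ → ℝ := fun x => if t ≤ x then (√x)⁻¹ else 0
  have hKχ : ∀ x, K x * x * K x = χ x := by
    intro x
    by_cases hx : t ≤ x
    · have hx0 : 0 < x := ht.trans_le hx
      simp only [K, χ, if_pos hx]
      field_simp
      rw [Real.sq_sqrt hx0.le]
    · simp only [K, χ, if_neg hx, mul_zero]
  refine ⟨cfc χ T, cfc_mem _ hT, cfc K T, cfc_mem _ hT, isStarProjection_cfc (hC χ) fun x _ => ?_,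
    cfc_predicate K T, ?_, ?_, ?_, ?_⟩
  · by_cases hx : t ≤ x <;> simp only [χ, hx, if_true, if_false, mul_one, mul_zero]
  · nth_rw 2 [← hid]
    rw [← cfc_mul K (fun x => x) T (hC _) (hC _), ← cfc_mul _ K T (hC _) (hC _)]
    exact cfc_congr fun x _ => hKχ x
  · have := (cfc_commute_cfc (fun x => x) K T).eq
    rwa [hid] at this
  · refine norm_cfc_le (by positivity) fun x _ => ?_
    by_cases hx : t ≤ x
    · simp only [K, if_pos hx]
      rw [Real.norm_of_nonneg (by positivity)]
      gcongr
    · simp only [K, if_neg hx, norm_zero]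
      positivity
  · have hsub : T - cfc χ T * T = cfc (fun x => x - χ x * x) T := by
      rw [cfc_sub (fun x => x) (fun x => χ x * x) T (hC _) (hC _),
        cfc_mul χ (fun x => x) T (hC _) (hC _), hid]
    rw [hsub]
    refine norm_cfc_le ht.le fun x hx => ?_
    by_cases hxt : t ≤ x
    · simp only [χ, if_pos hxt, one_mul, sub_self, norm_zero, ht.le]
    · simp only [χ, if_neg hxt, zero_mul, sub_zero]
      rw [Real.norm_of_nonneg (spectrum_nonneg_of_nonneg hT0 hx)]
      exact (not_le.1 hxt).le

end FiniteDimensional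

section AsymptoticAlgebra

open BoundedContinuousFunction Topology

/-- The ideal of null sequences in the algebra of bounded sequences. -/
noncomputable def nullSequences (A : Type*) [CStarAlgebra A] : TwoSidedIdeal (ℕ →ᵇ A) :=
  TwoSidedIdeal.mk' {x | Tendsto x atTop (𝓝 0)} tendsto_const_nhds
    (fun hx hy => add_zero (0 : A) ▸ Tendsto.add hx hy)
    (fun hx => neg_zero (G := A) ▸ Tendsto.neg hx)
    (fun {x _} hy => isBoundedUnder_le_mul_tendsto_zero
      (isBoundedUnder_of ⟨‖x‖, x.norm_coe_le_norm⟩) hy)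
    (fun {_ y} hx => hx.zero_mul_isBoundedUnder_le (isBoundedUnder_of ⟨‖y‖, y.norm_coe_le_norm⟩))

/-- The quotient `ℓ^∞(A) / c₀(A)` of the bounded sequences by the null sequences, in which
approximate relations between elements of `A` become exact. Only its ⋆-algebra structure is set up;
norm bounds are expressed through representatives. -/
abbrev AsymptoticAlgebra (A : Type*) [CStarAlgebra A] : Type _ :=
  (nullSequences A).ringCon.Quotient

namespace AsymptoticAlgebra

variable {A : Type*} [CStarAlgebra A]

theorem rel_iff {x y : ℕ →ᵇ A} :
    (nullSequences A).ringCon x y ↔ Tendsto (fun n => x n - y n) atTop (𝓝 0) :=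
  (TwoSidedIdeal.rel_iff _ x y).trans (TwoSidedIdeal.mem_mk' ..)

noncomputable instance : StarRing (AsymptoticAlgebra A) where
  star := Quotient.map' star fun x y h => rel_iff.2 (by simpa using! (rel_iff.1 h).star)
  star_involutive := Quotient.ind' fun x => congrArg Quotient.mk'' (star_star x)
  star_mul := Quotient.ind₂' fun x y => congrArg Quotient.mk'' (star_mul x y)
  star_add := Quotient.ind₂' fun x y => congrArg Quotient.mk'' (star_add x y)

instance : StarModule ℂ (AsymptoticAlgebra A) where
  star_smul c := Quotient.ind' fun x => congrArg Quotient.mk'' (star_smul c x)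

/-- The class of a bounded sequence modulo null sequences. -/
noncomputable def ofSeq : (ℕ →ᵇ A) →⋆ₐ[ℂ] AsymptoticAlgebra A :=
  { (nullSequences A).ringCon.mkₐ ℂ with map_star' := fun _ => rfl }

/-- The class of a constant sequence. -/
noncomputable def const : A →⋆ₐ[ℂ] AsymptoticAlgebra A :=
  ofSeq.comp
  { toFun := BoundedContinuousFunction.const ℕ
    map_one' := rfl
    map_mul' := fun _ _ => rfl
    map_zero' := rfl
    map_add' := fun _ _ => rfl
    commutes' := fun _ => rfl
    map_star' := fun _ => rfl }

theorem ofSeq_surjective : Function.Surjective (ofSeq : (ℕ →ᵇ A) → AsymptoticAlgebra A) :=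
  (nullSequences A).ringCon.mk'_surjective

theorem ofSeq_eq_ofSeq_iff {x y : ℕ →ᵇ A} :
    ofSeq x = ofSeq y ↔ Tendsto (fun n => ‖x n - y n‖) atTop (𝓝 0) :=
  ((nullSequences A).ringCon.eq).trans (rel_iff.trans tendsto_zero_iff_norm_tendsto_zero)

/-- The classes of bounded sequences whose `n`-th term lies in `S n`. -/
def sequencesIn (S : ℕ → Set A) : Set (AsymptoticAlgebra A) :=
  {X | ∃ x : ℕ →ᵇ A, (∀ n, x n ∈ S n) ∧ ofSeq x = X}

variable {S T U : ℕ → Set A} {X Y : AsymptoticAlgebra A}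

theorem ofSeq_mem_sequencesIn {x : ℕ →ᵇ A} (hx : ∀ n, x n ∈ S n) : ofSeq x ∈ sequencesIn S :=
  ⟨x, hx, rfl⟩

theorem const_mem_sequencesIn {a : A} (ha : ∀ n, a ∈ S n) : const a ∈ sequencesIn S :=
  ⟨_, ha, rfl⟩

theorem sequencesIn_mono (hST : ∀ n, S n ⊆ T n) : sequencesIn S ⊆ sequencesIn T := by
  rintro _ ⟨x, hx, rfl⟩
  exact ⟨x, fun n => hST n (hx n), rfl⟩

theorem star_mem_sequencesIn (hST : ∀ n, ∀ a ∈ S n, star a ∈ T n) (hX : X ∈ sequencesIn S) :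
    star X ∈ sequencesIn T := by
  obtain ⟨x, hx, rfl⟩ := hX
  exact ⟨star x, fun n => hST n _ (hx n), map_star ofSeq x⟩

theorem add_mem_sequencesIn (hU : ∀ n, ∀ a ∈ S n, ∀ b ∈ T n, a + b ∈ U n) (hX : X ∈ sequencesIn S)
    (hY : Y ∈ sequencesIn T) : X + Y ∈ sequencesIn U := by
  obtain ⟨x, hx, rfl⟩ := hX
  obtain ⟨y, hy, rfl⟩ := hY
  exact ⟨x + y, fun n => hU n _ (hx n) _ (hy n), map_add ofSeq x y⟩

theorem mul_mem_sequencesIn (hU : ∀ n, ∀ a ∈ S n, ∀ b ∈ T n, a * b ∈ U n) (hX : X ∈ sequencesIn S)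
    (hY : Y ∈ sequencesIn T) : X * Y ∈ sequencesIn U := by
  obtain ⟨x, hx, rfl⟩ := hX
  obtain ⟨y, hy, rfl⟩ := hY
  exact ⟨x * y, fun n => hU n _ (hx n) _ (hy n), map_mul ofSeq x y⟩

/-- The classes of bounded sequences whose `n`-th term lies in the ⋆-subalgebra `E n`. -/
def sequencesInSubalgebra (E : ℕ → StarSubalgebra ℂ A) :
    StarSubalgebra ℂ (AsymptoticAlgebra A) where
  carrier := sequencesIn fun n => E n
  mul_mem' := mul_mem_sequencesIn fun _ _ ha _ hb => mul_mem ha hb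
  add_mem' := add_mem_sequencesIn fun _ _ ha _ hb => add_mem ha hb
  algebraMap_mem' c := (const (A := A)).commutes' c ▸
    const_mem_sequencesIn fun n => algebraMap_mem (E n) c
  star_mem' := star_mem_sequencesIn fun _ _ ha => star_mem ha

theorem exists_ofSeq_of_norm_le {x : ℕ → A} {C : ℝ} (hx : ∀ n, ‖x n‖ ≤ C) :
    ∃ y : ℕ →ᵇ A, ∀ n, y n = x n :=
  ⟨.ofNormedAddCommGroupDiscrete x C hx, fun _ => rfl⟩

theorem ofSeq_eq_ofSeq_of_norm_sub_le {x y : ℕ →ᵇ A} {δ : ℕ → ℝ} (hδ : Tendsto δ atTop (𝓝 0))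
    (h : ∀ n, ‖x n - y n‖ ≤ δ n) : ofSeq x = ofSeq y :=
  ofSeq_eq_ofSeq_iff.2 <| squeeze_zero (fun _ => norm_nonneg _) h hδ

theorem exists_isSelfAdjoint_rep (hS : ∀ n, ∀ a ∈ S n, (2 : ℂ)⁻¹ • (a + star a) ∈ S n)
    (hX : X ∈ sequencesIn S) (hsa : IsSelfAdjoint X) :
    ∃ x : ℕ →ᵇ A, (∀ n, x n ∈ S n) ∧ (∀ n, IsSelfAdjoint (x n)) ∧ ofSeq x = X := by
  obtain ⟨x, hx, rfl⟩ := hX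
  refine ⟨(2 : ℂ)⁻¹ • (x + star x), fun n => hS n _ (hx n), fun n => ?_, ?_⟩
  · simp only [isSelfAdjoint_iff, coe_smul, coe_add, Pi.add_apply,
      BoundedContinuousFunction.star_apply, star_smul, star_add, star_star, star_inv₀, star_ofNat,
      add_comm]
  · rw [map_smul, map_add, map_star, hsa.star_eq, ← two_smul ℂ (ofSeq x), smul_smul,
      inv_mul_cancel₀ two_ne_zero, one_smul]

theorem commute_ofSeq_of_norm_sub_le {x y : ℕ →ᵇ A} {δ : ℕ → ℝ} (hδ : Tendsto δ atTop (𝓝 0))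
    (h : ∀ n, ‖x n * y n - y n * x n‖ ≤ δ n) : Commute (ofSeq x) (ofSeq y) := by
  rw [commute_iff_eq, ← map_mul, ← map_mul]
  exact ofSeq_eq_ofSeq_of_norm_sub_le hδ h

theorem commute_ofSeq {x y : ℕ →ᵇ A} (h : ∀ n, Commute (x n) (y n)) :
    Commute (ofSeq x) (ofSeq y) :=
  (show Commute x y from BoundedContinuousFunction.ext h).map ofSeq

theorem isSelfAdjoint_ofSeq {x : ℕ →ᵇ A} (h : ∀ n, IsSelfAdjoint (x n)) :
    IsSelfAdjoint (ofSeq x) :=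
  (show IsSelfAdjoint x from BoundedContinuousFunction.ext h).map ofSeq

theorem isStarProjection_ofSeq {p : ℕ →ᵇ A} (hp : ∀ n, IsStarProjection (p n)) :
    IsStarProjection (ofSeq p) where
  isIdempotentElem := (show IsIdempotentElem p from
    BoundedContinuousFunction.ext fun n => (hp n).isIdempotentElem).map ofSeq
  isSelfAdjoint := isSelfAdjoint_ofSeq fun n => (hp n).isSelfAdjoint

theorem isUnit_of_isUnit_ofSeq {x : ℕ →ᵇ A} (hx : IsUnit (ofSeq x)) :
    ∀ᶠ n in atTop, IsUnit (x n) := by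
  obtain ⟨Y, hxY, hYx⟩ := isUnit_iff_exists.1 hx
  obtain ⟨y, rfl⟩ := ofSeq_surjective Y
  have key : ∀ {u v : ℕ →ᵇ A}, ofSeq u * ofSeq v = 1 → ∀ᶠ n in atTop, IsUnit (u n * v n) := by
    intro u v huv
    rw [← map_mul, ← map_one ofSeq, ofSeq_eq_ofSeq_iff] at huv
    filter_upwards [huv.eventually_lt_const one_pos] with n hn
    rw [← sub_sub_cancel 1 (u n * v n)]
    exact isUnit_one_sub_of_norm_lt_one (by rwa [norm_sub_rev])
  filter_upwards [key hxY, key hYx] with n ⟨u, hu⟩ ⟨v, hv⟩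
  refine isUnit_iff_exists_and_exists.2 ⟨⟨y n * ↑u⁻¹, ?_⟩, ⟨↑v⁻¹ * y n, ?_⟩⟩
  · rw [← mul_assoc, ← hu, u.mul_inv]
  · rw [mul_assoc, ← hv, v.inv_mul]

theorem eq_zero_of_forall_mem_closedBall
    (hX : ∀ c > 0, X ∈ sequencesIn fun _ => Metric.closedBall 0 c) : X = 0 := by
  obtain ⟨x, rfl⟩ := ofSeq_surjective X
  rw [← map_zero ofSeq, ofSeq_eq_ofSeq_iff, Metric.tendsto_atTop']
  intro ε hε
  obtain ⟨y, hy, hyx⟩ := hX (ε / 2) (half_pos hε)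
  obtain ⟨N, hN⟩ := Metric.tendsto_atTop'.1 (ofSeq_eq_ofSeq_iff.1 hyx) (ε / 2) (half_pos hε)
  refine ⟨N, fun n hn => ?_⟩
  have h1 := hN n hn
  have h2 := mem_closedBall_zero_iff.1 (hy n)
  rw [dist_zero_right, norm_norm] at h1 ⊢
  have h3 := norm_sub_norm_le (x n) (y n)
  rw [norm_sub_rev] at h3
  simp only [coe_zero, Pi.zero_apply, sub_zero]
  linarith

theorem exists_ofSeq_eq_ofSeq_of_norm_sub_le {x : ℕ →ᵇ A} {y : ℕ → A} {f : ℕ → ℝ}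
    (hf : Tendsto f atTop (𝓝 0)) (h : ∀ n, ‖y n - x n‖ ≤ f n) :
    ∃ z : ℕ →ᵇ A, (∀ n, z n = y n) ∧ ofSeq z = ofSeq x := by
  obtain ⟨C, hC⟩ := hf.norm.bddAbove_range
  obtain ⟨z, hz⟩ := exists_ofSeq_of_norm_le (x := y) (C := C + ‖x‖) fun n =>
    calc ‖y n‖ ≤ ‖y n - x n‖ + ‖x n‖ := by simpa using norm_add_le (y n - x n) (x n)
      _ ≤ C + ‖x‖ := add_le_add ((h n).trans ((le_abs_self _).trans (hC ⟨n, rfl⟩)))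
        (x.norm_coe_le_norm n)
  exact ⟨z, hz, ofSeq_eq_ofSeq_of_norm_sub_le hf fun n => hz n ▸ h n⟩

theorem exists_ofSeq_mul_star_eq {w : ℕ → A} {x : ℕ →ᵇ A} {δ : ℕ → ℝ}
    (hδ : Tendsto δ atTop (𝓝 0)) (h : ∀ n, ‖w n * star (w n) - x n‖ ≤ δ n) :
    ∃ W : ℕ →ᵇ A, (∀ n, W n = w n) ∧ ofSeq W * star (ofSeq W) = ofSeq x := by
  obtain ⟨z, hz, hzx⟩ := exists_ofSeq_eq_ofSeq_of_norm_sub_le hδ h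
  obtain ⟨W, hW⟩ := exists_ofSeq_of_norm_le (x := w) (C := ‖z‖ + 1) fun n => by
    have hwz := z.norm_coe_le_norm n
    rw [hz, CStarRing.norm_self_mul_star] at hwz
    nlinarith [norm_nonneg (w n)]
  refine ⟨W, hW, ?_⟩
  rw [← hzx, ← map_star, ← map_mul]
  exact congrArg ofSeq <| BoundedContinuousFunction.ext fun n => by simp [hW, hz]

theorem mul_const_eq_zero_of_mem_sequencesIn {x : A} (h : ∀ n, ∀ a ∈ S n, a * x = 0)
    (hX : X ∈ sequencesIn S) : X * const x = 0 := by
  obtain ⟨X, hX, rfl⟩ := hX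
  exact (map_mul ofSeq X (.const ℕ x)).symm.trans <| (congrArg ofSeq <|
    BoundedContinuousFunction.ext fun n => h n _ (hX n)).trans (map_zero ofSeq)

theorem mul_const_eq_self_of_mem_sequencesIn {x : A} (h : ∀ n, ∀ a ∈ S n, a * x = a)
    (hX : X ∈ sequencesIn S) : X * const x = X := by
  have := mul_const_eq_zero_of_mem_sequencesIn (x := 1 - x)
    (fun n a ha => by rw [mul_sub, mul_one, h n a ha, sub_self]) hX
  rwa [map_sub, map_one, mul_sub, mul_one, sub_eq_zero, eq_comm] at this

theorem mul_star_eq_zero_of_mem_sequencesIn (h : ∀ n, ∀ a ∈ S n, ∀ b ∈ T n, a * star b = 0)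
    (hX : X ∈ sequencesIn S) (hY : Y ∈ sequencesIn T) : X * star Y = 0 := by
  obtain ⟨x, hx, rfl⟩ := hX
  obtain ⟨y, hy, rfl⟩ := hY
  rw [← map_star, ← map_mul, ← map_zero ofSeq]
  exact congrArg ofSeq <| BoundedContinuousFunction.ext fun n => h n _ (hx n) _ (hy n)

theorem isSelfAdjoint_of_mem_sequencesIn (h : ∀ n, ∀ a ∈ S n, IsSelfAdjoint a)
    (hX : X ∈ sequencesIn S) : IsSelfAdjoint X := by
  obtain ⟨x, hx, rfl⟩ := hX
  exact isSelfAdjoint_ofSeq fun n => h n _ (hx n)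

theorem mem_unitary_of_mem_sequencesIn (h : ∀ n, S n ⊆ unitary A) (hX : X ∈ sequencesIn S) :
    X ∈ unitary (AsymptoticAlgebra A) := by
  obtain ⟨x, hx, rfl⟩ := hX
  have hx' : x ∈ unitary (ℕ →ᵇ A) := Unitary.mem_iff.2
    ⟨BoundedContinuousFunction.ext fun n => Unitary.star_mul_self_of_mem (h n (hx n)),
      BoundedContinuousFunction.ext fun n => Unitary.mul_star_self_of_mem (h n (hx n))⟩
  exact Unitary.map_mem ofSeq hx'

theorem add_mem_sequencesIn_closedBall {c d : ℝ}
    (hX : X ∈ sequencesIn fun _ => Metric.closedBall 0 c)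
    (hY : Y ∈ sequencesIn fun _ => Metric.closedBall 0 d) :
    X + Y ∈ sequencesIn fun _ => Metric.closedBall 0 (c + d) :=
  add_mem_sequencesIn (fun _ a ha b hb => by
    rw [mem_closedBall_zero_iff] at *
    exact norm_add_le_of_le ha hb) hX hY

theorem mul_mem_sequencesIn_closedBall {c d : ℝ}
    (hX : X ∈ sequencesIn fun _ => Metric.closedBall 0 c)
    (hY : Y ∈ sequencesIn fun _ => Metric.closedBall 0 d) :
    X * Y ∈ sequencesIn fun _ => Metric.closedBall 0 (c * d) :=
  mul_mem_sequencesIn (fun _ a ha b hb => by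
    rw [mem_closedBall_zero_iff] at *
    exact norm_mul_le_of_le ha hb) hX hY

theorem exists_smul_mem_sequencesIn_closedBall (X : AsymptoticAlgebra A) {θ : ℝ} (hθ : 0 < θ) :
    ∃ c : ℝ, 0 < c ∧ (c : ℂ) • X ∈ sequencesIn fun _ => Metric.closedBall 0 θ := by
  obtain ⟨x, rfl⟩ := ofSeq_surjective X
  have hx : 0 < ‖x‖ + 1 := by positivity
  have hc : 0 < θ / (‖x‖ + 1) := div_pos hθ hx
  refine ⟨θ / (‖x‖ + 1), hc, ?_⟩
  rw [← map_smul]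
  refine ofSeq_mem_sequencesIn fun n => ?_
  rw [mem_closedBall_zero_iff, coe_smul, norm_smul, Complex.norm_real, Real.norm_of_nonneg hc.le,
    div_mul_eq_mul_div, div_le_iff₀ hx]
  gcongr
  exact (x.norm_coe_le_norm n).trans (le_add_of_nonneg_right zero_le_one)

theorem exists_isUnit_norm_sub_le {a : A} {c : ℝ} (hX : IsUnit X)
    (h : X - const a ∈ sequencesIn fun _ => Metric.closedBall 0 c) :
    ∃ x, IsUnit x ∧ ‖x - a‖ ≤ c := by
  obtain ⟨y, hy, hyX⟩ := h
  rw [eq_sub_iff_add_eq] at hyX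
  rw [← hyX] at hX
  obtain ⟨n, hn⟩ := (isUnit_of_isUnit_ofSeq (x := y + .const ℕ a) (by simpa using! hX)).exists
  exact ⟨_, hn, by simpa using hy n⟩

theorem exists_isSelfAdjoint_isUnit_norm_sub_le {a : A} {c : ℝ} (ha : IsSelfAdjoint a)
    (hX : IsUnit X) (hX' : IsSelfAdjoint X)
    (h : X - const a ∈ sequencesIn fun _ => Metric.closedBall 0 c) :
    ∃ x, (IsSelfAdjoint x ∧ IsUnit x) ∧ ‖x - a‖ ≤ c := by
  obtain ⟨y, hy, hysa, hyX⟩ := exists_isSelfAdjoint_rep (fun _ b hb => by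
    rw [mem_closedBall_zero_iff] at *
    rw [norm_smul, norm_inv, Complex.norm_ofNat, inv_mul_le_iff₀ two_pos, two_mul]
    exact norm_add_le_of_le hb ((norm_star b).trans_le hb)) h (hX'.sub (ha.map const))
  rw [eq_sub_iff_add_eq] at hyX
  rw [← hyX] at hX
  obtain ⟨n, hn⟩ := (isUnit_of_isUnit_ofSeq (x := y + .const ℕ a) (by simpa using! hX)).exists
  exact ⟨_, ⟨(hysa n).add ha, hn⟩, by simpa using hy n⟩

variable {E : ℕ → StarSubalgebra ℂ A}

theorem exists_commuting_rep {p : ℕ →ᵇ A} (hp : ∀ n, p n ∈ E n) (hp' : ∀ n, IsStarProjection (p n))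
    (hX : X ∈ sequencesInSubalgebra E) (hpX : Commute (ofSeq p) X) :
    ∃ d : ℕ →ᵇ A, (∀ n, d n ∈ E n) ∧ (∀ n, Commute (p n) (d n)) ∧
      (IsSelfAdjoint X → ∀ n, IsSelfAdjoint (d n)) ∧ ofSeq d = X := by
  obtain ⟨w, hwE, hwsa, rfl⟩ : ∃ w : ℕ →ᵇ A, (∀ n, w n ∈ E n) ∧
      (IsSelfAdjoint X → ∀ n, IsSelfAdjoint (w n)) ∧ ofSeq w = X := by
    by_cases hsa : IsSelfAdjoint X
    · obtain ⟨w, hw, hwsa, hwX⟩ := exists_isSelfAdjoint_rep (fun n a ha =>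
        (E n).smul_mem (add_mem ha (star_mem ha)) _) hX hsa
      exact ⟨w, hw, fun _ => hwsa, hwX⟩
    · obtain ⟨w, hw, hwX⟩ := hX
      exact ⟨w, hw, fun h => (hsa h).elim, hwX⟩
  have hp1 n : 1 - p n ∈ E n := sub_mem (one_mem (E n)) (hp n)
  refine ⟨p * w * p + (1 - p) * w * (1 - p), fun n => ?_, fun n => ?_, fun hsa n => ?_, ?_⟩
  · exact add_mem (mul_mem (mul_mem (hp n) (hwE n)) (hp n))
      (mul_mem (mul_mem (hp1 n) (hwE n)) (hp1 n))
  · exact commute_pinching (hp' n).isIdempotentElem (w n)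
  · have h := (hwsa hsa n).conjugate_self (hp' n).isSelfAdjoint
    exact h.add ((hwsa hsa n).conjugate_self (hp' n).one_sub.isSelfAdjoint)
  · have hpp := (isStarProjection_ofSeq hp').isIdempotentElem
    simp only [map_add, map_mul, map_sub, map_one, pinching_eq_of_commute hpp hpX]

variable [∀ n, FiniteDimensional ℂ (E n)]

theorem mem_sequencesIn_isStarProjection (hX : X ∈ sequencesInSubalgebra E)
    (h : IsStarProjection X) :
    X ∈ sequencesIn fun n => (E n : Set A) ∩ {p | IsStarProjection p} := by
  obtain ⟨x, hxE, hxsa, rfl⟩ := exists_isSelfAdjoint_rep (fun n a ha =>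
    (E n).smul_mem (add_mem ha (star_mem ha)) _) hX h.isSelfAdjoint
  choose p hpE hp hpx using fun n => exists_isStarProjection_near (E n) (hxE n) (hxsa n)
  have hlim := (ofSeq_eq_ofSeq_iff.1 ((map_mul ofSeq x x).trans h.isIdempotentElem)).const_mul 2
  rw [mul_zero] at hlim
  obtain ⟨z, hz, hzx⟩ := exists_ofSeq_eq_ofSeq_of_norm_sub_le hlim hpx
  exact ⟨z, fun n => hz n ▸ ⟨hpE n, hp n⟩, hzx⟩

theorem mul_eq_one_comm_of_mem (hX : X ∈ sequencesInSubalgebra E) (hXY : X * Y = 1) :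
    Y * X = 1 := by
  obtain ⟨x, hx, rfl⟩ := hX
  obtain ⟨y, rfl⟩ := ofSeq_surjective Y
  rw [← map_mul, ← map_one ofSeq, ofSeq_eq_ofSeq_iff] at hXY ⊢
  have hlim := (hXY.const_mul (2 * ‖y‖)).mul_const ‖x‖
  rw [mul_zero, zero_mul] at hlim
  refine squeeze_zero' (.of_forall fun _ => norm_nonneg _) ?_ hlim
  filter_upwards [hXY.eventually_le_const one_half_pos] with n hn
  refine (norm_mul_sub_one_comm_le (E n) (hx n) hn).trans ?_
  gcongr
  · exact y.norm_coe_le_norm n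
  · exact le_rfl
  · exact x.norm_coe_le_norm n

theorem exists_isUnit_near [PartialOrder A] [StarOrderedRing A] {P : AsymptoticAlgebra A}
    (hX : X ∈ sequencesInSubalgebra E) (hP : P ∈ sequencesInSubalgebra E) (hP' : IsStarProjection P)
    (hPX : Commute P X) {η : ℝ} (hη : 0 < η) :
    ∃ U : (AsymptoticAlgebra A)ˣ, Commute P U ∧
      (IsSelfAdjoint X → IsSelfAdjoint (U : AsymptoticAlgebra A)) ∧
      ↑U - X ∈ sequencesIn fun _ => Metric.closedBall 0 (2 * η) := by
  obtain ⟨p, hp, rfl⟩ := mem_sequencesIn_isStarProjection hP hP'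
  obtain ⟨d, hdE, hpd, hdsa, rfl⟩ :=
    exists_commuting_rep (fun n => (hp n).1) (fun n => (hp n).2) hX hPX
  choose u hud hu' husa hpu using fun n => exists_unit_near (E n) (hdE n) hη
  obtain ⟨U, hU⟩ := exists_ofSeq_of_norm_le (x := fun n => (u n : A)) (C := 2 * η + ‖d‖) fun n =>
    calc ‖(u n : A)‖ ≤ ‖(u n : A) - d n‖ + ‖d n‖ := by
          simpa using norm_add_le ((u n : A) - d n) (d n)
      _ ≤ 2 * η + ‖d‖ := add_le_add (hud n) (d.norm_coe_le_norm n)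
  obtain ⟨U', hU'⟩ := exists_ofSeq_of_norm_le hu'
  refine ⟨⟨ofSeq U, ofSeq U', ?_, ?_⟩, ?_, fun hsa => ?_, ?_⟩
  · rw [← map_mul, ← map_one ofSeq]
    exact congrArg ofSeq <| BoundedContinuousFunction.ext fun n => by simp [hU, hU']
  · rw [← map_mul, ← map_one ofSeq]
    exact congrArg ofSeq <| BoundedContinuousFunction.ext fun n => by simp [hU, hU']
  · refine commute_ofSeq fun n => ?_
    rw [hU]
    exact hpu n (p n) (hp n).2.isSelfAdjoint (hpd n)
  · refine isSelfAdjoint_ofSeq fun n => ?_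
    rw [hU]
    exact husa n (hdsa hsa n)
  · exact map_sub ofSeq U d ▸ ofSeq_mem_sequencesIn fun n => by simpa [hU] using hud n

variable [PartialOrder A] [StarOrderedRing A]

theorem mem_sequencesIn_nonneg (hX : X ∈ sequencesInSubalgebra E)
    (h : X ∈ sequencesIn fun _ => Set.Ici 0) :
    X ∈ sequencesIn fun n => (E n : Set A) ∩ Set.Ici 0 := by
  obtain ⟨k, hk, rfl⟩ := h
  have hksa := isSelfAdjoint_ofSeq fun n => IsSelfAdjoint.of_nonneg (hk n)
  obtain ⟨x, hxE, hxsa, hxk⟩ := exists_isSelfAdjoint_rep (fun n a ha =>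
    (E n).smul_mem (add_mem ha (star_mem ha)) _) hX hksa
  choose t htE ht htx using fun n => exists_nonneg_near (E n) (hxE n) (hxsa n) (hk n)
  obtain ⟨z, hz, hzx⟩ := exists_ofSeq_eq_ofSeq_of_norm_sub_le (ofSeq_eq_ofSeq_iff.1 hxk) htx
  exact ⟨z, fun n => hz n ▸ ⟨htE n, ht n⟩, hzx.trans hxk⟩

theorem exists_polar (hX : X ∈ sequencesInSubalgebra E) :
    ∃ V ∈ sequencesIn fun n => (E n : Set A) ∩ unitary A,
      ∃ T ∈ sequencesIn fun n => (E n : Set A) ∩ Set.Ici 0, V * T = X := by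
  obtain ⟨x, hx, rfl⟩ := hX
  choose v hvE t htE hv ht hvt using fun n : ℕ =>
    exists_unitary_mul_nonneg (E n) (hx n) (Nat.one_div_pos_of_nat (n := n) (α := ℝ))
  have hlim := tendsto_one_div_add_atTop_nhds_zero_nat (𝕜 := ℝ)
  obtain ⟨vt, hvt', hvtx⟩ := exists_ofSeq_eq_ofSeq_of_norm_sub_le hlim hvt
  obtain ⟨V, hV⟩ := exists_ofSeq_of_norm_le (x := v) (C := ‖(1 : A)‖) fun n => by
    rw [← mul_one (v n), CStarRing.norm_mem_unitary_mul 1 (hv n)]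
  obtain ⟨T, hT⟩ := exists_ofSeq_of_norm_le (x := t) (C := ‖vt‖) fun n => by
    rw [← CStarRing.norm_mem_unitary_mul (t n) (hv n), ← hvt']
    exact vt.norm_coe_le_norm n
  refine ⟨ofSeq V, ofSeq_mem_sequencesIn fun n => hV n ▸ ⟨hvE n, hv n⟩, ofSeq T,
    ofSeq_mem_sequencesIn fun n => hT n ▸ ⟨htE n, ht n⟩, (map_mul ofSeq V T).symm.trans ?_⟩
  refine Eq.trans (congrArg ofSeq ?_) hvtx
  ext n
  rw [hvt', coe_mul, Pi.mul_apply, hV, hT]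

theorem exists_asymptotic_cutoff {T : AsymptoticAlgebra A}
    (hT : T ∈ sequencesIn fun n => (E n : Set A) ∩ Set.Ici 0) {t : ℝ} (ht : 0 < t) :
    ∃ F ∈ sequencesInSubalgebra E, ∃ K ∈ sequencesInSubalgebra E, IsStarProjection F ∧
      IsSelfAdjoint K ∧ K * T * K = F ∧ T * K = K * T ∧
      T - F * T ∈ sequencesIn fun _ => Metric.closedBall 0 t := by
  obtain ⟨x, hx, rfl⟩ := hT
  choose f hfE κ hκE hf hκ hκx hxκ hκn hfx using fun n =>
    exists_spectral_cutoff (E n) (hx n).1 (hx n).2 ht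
  obtain ⟨F, hF⟩ := exists_ofSeq_of_norm_le fun n => IsStarProjection.norm_le (f n) (hf n)
  obtain ⟨K, hK⟩ := exists_ofSeq_of_norm_le hκn
  obtain rfl : ⇑F = f := funext hF
  obtain rfl : ⇑K = κ := funext hK
  refine ⟨ofSeq F, ofSeq_mem_sequencesIn hfE, ofSeq K, ofSeq_mem_sequencesIn hκE,
    isStarProjection_ofSeq hf, isSelfAdjoint_ofSeq hκ, ?_, commute_ofSeq hxκ, ?_⟩
  · rw [← map_mul, ← map_mul]
    exact congrArg ofSeq <| BoundedContinuousFunction.ext hκx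
  · rw [← map_mul, ← map_sub]
    exact ofSeq_mem_sequencesIn fun n => mem_closedBall_zero_iff.2 (hfx n)

end AsymptoticAlgebra

end AsymptoticAlgebra

open AsymptoticAlgebra
open scoped BoundedContinuousFunction

section Ideals

variable {A : Type*} [CStarAlgebra A]

/-- The two-sided ideal of the ⋆-subalgebra `B` generated by `k`, as an additive subgroup of the
ambient algebra: the finite sums of elements `x * k * y` with `x, y ∈ B`. -/
def idealSpan (B : StarSubalgebra ℂ A) (k : A) : AddSubgroup A :=
  AddSubgroup.closure {b | ∃ x ∈ B, ∃ y ∈ B, b = x * k * y}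

variable {B : StarSubalgebra ℂ A} {a b k : A}

theorem mul_mul_mem_idealSpan (ha : a ∈ B) (hb : b ∈ B) : a * k * b ∈ idealSpan B k :=
  AddSubgroup.subset_closure ⟨a, ha, b, hb, rfl⟩

theorem mul_mem_idealSpan_left (hb : b ∈ B) (ha : a ∈ idealSpan B k) : b * a ∈ idealSpan B k := by
  induction ha using AddSubgroup.closure_induction with
  | mem a ha =>
    obtain ⟨x, hx, y, hy, rfl⟩ := ha
    rw [← mul_assoc, ← mul_assoc]
    exact mul_mul_mem_idealSpan (mul_mem hb hx) hy
  | zero => exact (mul_zero b).symm ▸ zero_mem _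
  | add x y _ _ hx hy => exact (mul_add b x y).symm ▸ add_mem hx hy
  | neg x _ hx => exact (mul_neg b x).symm ▸ neg_mem hx

theorem mul_mem_idealSpan_right (hb : b ∈ B) (ha : a ∈ idealSpan B k) : a * b ∈ idealSpan B k := by
  induction ha using AddSubgroup.closure_induction with
  | mem a ha =>
    obtain ⟨x, hx, y, hy, rfl⟩ := ha
    rw [mul_assoc]
    exact mul_mul_mem_idealSpan hx (mul_mem hy hb)
  | zero => exact (zero_mul b).symm ▸ zero_mem _
  | add x y _ _ hx hy => exact (add_mul x y b).symm ▸ add_mem hx hy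
  | neg x _ hx => exact (neg_mul x b).symm ▸ neg_mem hx

theorem idealSpan_le (hk : k ∈ B) (ha : a ∈ idealSpan B k) : a ∈ B := by
  induction ha using AddSubgroup.closure_induction with
  | mem a ha =>
    obtain ⟨x, hx, y, hy, rfl⟩ := ha
    exact mul_mem (mul_mem hx hk) hy
  | zero => exact zero_mem B
  | add _ _ _ _ hx hy => exact add_mem hx hy
  | neg _ _ hx => exact neg_mem hx

theorem one_mem_idealSpan_of_norm_lt_one (hB : IsClosed (B : Set A)) (hk : k ∈ B)
    (ha : a ∈ idealSpan B k) (ha1 : ‖a - 1‖ < 1) : 1 ∈ idealSpan B k := by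
  obtain ⟨u, rfl⟩ : IsUnit a := by
    simpa using isUnit_one_sub_of_norm_lt_one (x := 1 - a) (by rwa [norm_sub_rev])
  exact u.mul_inv ▸ mul_mem_idealSpan_right (val_inv_mem_of_isClosed hB (idealSpan_le hk ha)) ha

theorem exists_mul_mul_ne_zero (h1 : 1 ∈ idealSpan B k) (ha : a ≠ 0) :
    ∃ x ∈ B, a * x * k ≠ 0 := by
  by_contra! h
  suffices ∀ y ∈ idealSpan B k, a * y = 0 from ha (mul_one a ▸ this 1 h1)
  intro y hy
  induction hy using AddSubgroup.closure_induction with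
  | mem y hy =>
    obtain ⟨x, hx, z, -, rfl⟩ := hy
    rw [← mul_assoc, ← mul_assoc, h x hx, zero_mul]
  | zero => exact mul_zero a
  | add x y _ _ hx hy => rw [mul_add, hx, hy, add_zero]
  | neg x _ hx => rw [mul_neg, hx, neg_zero]

theorem IsSimpleCStarAlgebra.one_mem_idealSpan_top (hs : IsSimpleCStarAlgebra A) (hk : k ≠ 0) :
    1 ∈ idealSpan (⊤ : StarSubalgebra ℂ A) k := by
  set J := (idealSpan (⊤ : StarSubalgebra ℂ A) k).topologicalClosure
  have hleft (x : A) {y : A} (hy : y ∈ J) : x * y ∈ J :=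
    map_mem_closure (f := (x * ·)) (continuous_const_mul x) hy fun _ =>
      mul_mem_idealSpan_left (B := ⊤) trivial
  have hright {x : A} (y : A) (hx : x ∈ J) : x * y ∈ J :=
    map_mem_closure (f := (· * y)) (continuous_mul_const y) hx fun _ =>
      mul_mem_idealSpan_right (B := ⊤) trivial
  set I : TwoSidedIdeal A := .mk' J J.zero_mem J.add_mem J.neg_mem (hleft _) (hright _)
  have hI : (I : Set A) = J := TwoSidedIdeal.coe_mk' ..
  have hkI : k ∈ I := by
    rw [← SetLike.mem_coe, hI]
    exact AddSubgroup.le_topologicalClosure _ <| by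
      simpa using mul_mul_mem_idealSpan (B := ⊤) (k := k) (a := 1) (b := 1) trivial trivial
  have h1 : (1 : A) ∈ I := by
    rcases hs I (hI ▸ AddSubgroup.isClosed_topologicalClosure _) with h | h
    · exact (hk ((TwoSidedIdeal.mem_bot A).1 (h ▸ hkI))).elim
    · exact h ▸ trivial
  rw [← SetLike.mem_coe, hI] at h1
  obtain ⟨a, ha, ha1⟩ := Metric.mem_closure_iff.1 h1 1 one_pos
  exact one_mem_idealSpan_of_norm_lt_one isClosed_univ trivial ha
    (by rwa [← dist_eq_norm, dist_comm])

end Ideals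

section CentrallyLarge

variable {A : Type*} [CStarAlgebra A] {B : StarSubalgebra ℂ A}

theorem CuntzSubeqIn.exists_norm_sub_lt {g k : A} (h : CuntzSubeqIn (B : Set A) g (k * star k))
    {ε : ℝ} (hε : 0 < ε) : ∃ z ∈ B, ‖z * k * star (z * k) - g‖ < ε := by
  obtain ⟨r, hr, hlim⟩ := h
  obtain ⟨n, hn⟩ := (hlim.eventually_lt_const hε).exists
  exact ⟨r n, hr n, by simpa only [star_mul, mul_assoc] using hn⟩

theorem exists_finite_mul_mul_mem_idealSpan {k s : A}
    (hs : s ∈ idealSpan (⊤ : StarSubalgebra ℂ A) k) :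
    ∃ F : Set A, F.Finite ∧ ∀ H : AsymptoticAlgebra A, IsSelfAdjoint H →
      (∀ a ∈ F, H * const a ∈ sequencesInSubalgebra fun _ => B) →
      H * const s * H ∈ sequencesIn fun _ => (idealSpan B k : Set A) := by
  induction hs using AddSubgroup.closure_induction with
  | mem s hs =>
    obtain ⟨x, -, y, -, rfl⟩ := hs
    refine ⟨{x, star y}, Set.toFinite _, fun H hH hF => ?_⟩
    obtain ⟨u, hu, hux⟩ := hF x (.inl rfl)
    obtain ⟨v, hv, hvy⟩ := hF (star y) (.inr rfl)
    refine ⟨u * BoundedContinuousFunction.const ℕ k * star v, fun n =>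
      mul_mul_mem_idealSpan (hu n) (star_mem (hv n)), ?_⟩
    calc ofSeq (u * BoundedContinuousFunction.const ℕ k * star v)
        = ofSeq u * const k * star (ofSeq v) := by rw [map_mul, map_mul, map_star]; rfl
      _ = H * const (x * k * y) * H := by
        simp only [hux, hvy, star_mul, hH.star_eq, map_star, star_star, map_mul, mul_assoc]
  | zero => exact ⟨∅, Set.finite_empty, fun H _ _ => ⟨0, fun _ => zero_mem _, by simp⟩⟩
  | add s t _ _ hs ht =>
    obtain ⟨F, hF, hFs⟩ := hs
    obtain ⟨F', hF', hFt⟩ := ht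
    refine ⟨F ∪ F', hF.union hF', fun H hH h => ?_⟩
    rw [map_add, mul_add, add_mul]
    exact add_mem_sequencesIn (fun _ _ ha _ hb => add_mem ha hb)
      (hFs H hH fun a ha => h a (.inl ha)) (hFt H hH fun a ha => h a (.inr ha))
  | neg s _ hs =>
    obtain ⟨F, hF, hFs⟩ := hs
    refine ⟨F, hF, fun H hH h => ?_⟩
    obtain ⟨x, hx, hxs⟩ := hFs H hH h
    exact ⟨-x, fun n => neg_mem (hx n), by rw [map_neg, map_neg, mul_neg, neg_mul, hxs]⟩

variable [PartialOrder A] [StarOrderedRing A]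

theorem IsCentrallyLarge.exists_asymptotic_cutdown (hl : IsCentrallyLarge B) {F : Set A}
    (hF : F.Finite) {x : A} (hx : 0 ≤ x) (hx1 : ‖x‖ = 1) {k : A} (hk : k ∈ B) (hk0 : k ≠ 0) :
    ∃ g : ℕ →ᵇ A, ∃ N ∈ sequencesIn fun _ => {b | ∃ z ∈ B, b = z * k},
      (∀ n, g n ∈ B ∧ 0 ≤ g n ∧ g n ≤ 1) ∧ ofSeq g = N * star N ∧
      (∀ a ∈ F, Commute (ofSeq g) (const a)) ∧
      (∀ a ∈ F, (1 - ofSeq g) * const a ∈ sequencesInSubalgebra fun _ => B) ∧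
      ∀ n : ℕ, 1 - 1 / ((n : ℝ) + 1) < ‖(1 - g n) * x * (1 - g n)‖ := by
  obtain ⟨m, a, -, rfl⟩ := hF.fin_param
  have hδ (n : ℕ) : 0 < 1 / ((n : ℝ) + 1) := Nat.one_div_pos_of_nat
  have hlim := tendsto_one_div_add_atTop_nhds_zero_nat (𝕜 := ℝ)
  choose c g hgB hg0 hg1 hca hcB hgk _ hgx hga using fun n => hl m a _ (hδ n) x hx hx1 (k * star k)
    (mul_mem hk (star_mem hk)) (mul_star_self_nonneg k) (by simpa using hk0)
  choose z hz hzg using fun n => (hgk n).exists_norm_sub_lt (hδ n)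
  have hgn n : ‖g n‖ ≤ 1 := CStarAlgebra.norm_le_one_iff_of_nonneg (g n) (hg0 n) |>.2 (hg1 n)
  have hgn' n : ‖1 - g n‖ ≤ 1 :=
    CStarAlgebra.norm_le_one_iff_of_nonneg _ (sub_nonneg.2 (hg1 n)) |>.2 (sub_le_self 1 (hg0 n))
  obtain ⟨G, hG⟩ := exists_ofSeq_of_norm_le hgn
  obtain rfl : ⇑G = g := funext hG
  obtain ⟨N, hN, hNG⟩ := exists_ofSeq_mul_star_eq hlim fun n => (hzg n).le
  refine ⟨G, ofSeq N, ofSeq_mem_sequencesIn fun n => hN n ▸ ⟨z n, hz n, rfl⟩,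
    fun n => ⟨hgB n, hg0 n, hg1 n⟩, hNG.symm, ?_, ?_, hgx⟩
  · rintro _ ⟨j, rfl⟩
    exact commute_ofSeq_of_norm_sub_le hlim fun n => (hga n j).le
  · rintro _ ⟨j, rfl⟩
    obtain ⟨w, hw, hwG⟩ := exists_ofSeq_eq_ofSeq_of_norm_sub_le
      (x := (1 - G) * BoundedContinuousFunction.const ℕ (a j))
      (y := fun n => (1 - G n) * c n j) hlim fun n => by
        have : ‖(1 - G n) * (c n j - a j)‖ ≤ 1 * (1 / ((n : ℝ) + 1)) :=
          norm_mul_le_of_le (hgn' n) (hca n j).le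
        simpa [mul_sub] using this
    exact ⟨w, fun n => hw n ▸ hcB n j, hwG.trans (by rw [map_mul, map_sub, map_one]; rfl)⟩

theorem IsCentrallyLarge.one_mem_idealSpan (hl : IsCentrallyLarge B) (hs : IsSimpleCStarAlgebra A)
    (hB : IsClosed (B : Set A)) {k : A} (hk : k ∈ B) (hk0 : k ≠ 0) : 1 ∈ idealSpan B k := by
  have : Nontrivial A := ⟨k, 0, hk0⟩
  obtain ⟨F, hF, hFk⟩ :=
    exists_finite_mul_mul_mem_idealSpan (B := B) (hs.one_mem_idealSpan_top hk0)
  obtain ⟨g, N, ⟨m, hm, rfl⟩, hg, hgN, -, hgF, -⟩ :=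
    hl.exists_asymptotic_cutdown hF zero_le_one norm_one hk hk0
  have hgsa : IsSelfAdjoint (ofSeq g) := hgN ▸ IsSelfAdjoint.mul_star_self (ofSeq m)
  obtain ⟨x, hx, hxg⟩ := hFk (1 - ofSeq g) ((IsSelfAdjoint.one _).sub hgsa) hgF
  have hlim : ofSeq (x + (2 - g) * (m * star m)) = ofSeq 1 := by
    rw [map_add, hxg, map_mul, map_mul, map_star, ← hgN, map_sub, map_ofNat, map_one, map_one]
    noncomm_ring
  obtain ⟨n, hn⟩ := ((ofSeq_eq_ofSeq_iff.1 hlim).eventually_lt_const one_pos).exists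
  obtain ⟨z, hz, hzm⟩ := hm n
  have hzk : (2 - g n) * z * k * star (z * k) ∈ idealSpan B k :=
    mul_mul_mem_idealSpan (mul_mem (sub_mem (ofNat_mem B 2) (hg n).1) hz) (star_mem (mul_mem hz hk))
  refine one_mem_idealSpan_of_norm_lt_one hB hk (add_mem (hx n) hzk) ?_
  simpa [hzm, mul_assoc] using hn

end CentrallyLarge

section TracialRankZero

variable {A : Type*} [CStarAlgebra A] {B : StarSubalgebra ℂ A}

theorem finiteDimensional_adjoin (E : NonUnitalStarSubalgebra ℂ A) [FiniteDimensional ℂ E] :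
    FiniteDimensional ℂ (StarAlgebra.adjoin ℂ (E : Set A)) := by
  have : FiniteDimensional ℂ (Unitization ℂ E) :=
    .of_surjective ((Algebra.linearMap ℂ (Unitization ℂ E)).coprod (Unitization.inrHom ℂ ℂ E))
      fun x => ⟨(x.fst, x.snd), Unitization.inl_fst_add_inr_snd_eq x⟩
  rw [← NonUnitalStarSubalgebra.unitization_range]
  exact .of_surjective (NonUnitalStarSubalgebra.unitization E).rangeRestrict.toLinearMap
    (NonUnitalStarSubalgebra.unitization E).rangeRestrict_surjective

theorem eq_zero_of_isIdempotentElem_of_norm_lt_one {p : A} (hp : IsIdempotentElem p)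
    (h : ‖p‖ < 1) : p = 0 := by
  have h1 := norm_mul_le p p
  rw [hp.eq] at h1
  exact norm_le_zero_iff.1 (by nlinarith [norm_nonneg p])

theorem isProjection_iff_isStarProjection {p : A} : IsProjection p ↔ IsStarProjection p :=
  ⟨fun h => ⟨h.2.symm, h.1.symm⟩, fun h => ⟨h.isSelfAdjoint.symm, h.isIdempotentElem.symm⟩⟩

theorem exists_finite_forall_commute_mul_mul_eq_zero {k s : A} (hs : s ∈ idealSpan B k) :
    ∃ F : Set A, F.Finite ∧ F ⊆ B ∧ ∀ P : AsymptoticAlgebra A,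
      (∀ a ∈ F, Commute P (const a)) → P * const k * P = 0 → P * const s * P = 0 := by
  induction hs using AddSubgroup.closure_induction with
  | mem s hs =>
    obtain ⟨x, hx, y, hy, rfl⟩ := hs
    refine ⟨{x, y}, Set.toFinite _, Set.pair_subset hx hy, fun P hF hk => ?_⟩
    calc P * const (x * k * y) * P
        = P * const x * const k * (const y * P) := by simp only [map_mul, mul_assoc]
      _ = const x * (P * const k * P) * const y := by
        rw [(hF x (.inl rfl)).eq, ← (hF y (.inr rfl)).eq]
        simp only [mul_assoc]
      _ = 0 := by rw [hk, mul_zero, zero_mul]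
  | zero => exact ⟨∅, Set.finite_empty, Set.empty_subset _, fun P _ _ => by simp⟩
  | add s t _ _ hs ht =>
    obtain ⟨F, hF, hFB, hFs⟩ := hs
    obtain ⟨F', hF', hFB', hFt⟩ := ht
    refine ⟨F ∪ F', hF.union hF', Set.union_subset hFB hFB', fun P h hk => ?_⟩
    rw [map_add, mul_add, add_mul, hFs P (fun a ha => h a (.inl ha)) hk,
      hFt P (fun a ha => h a (.inr ha)) hk, add_zero]
  | neg s _ hs =>
    obtain ⟨F, hF, hFB, hFs⟩ := hs
    exact ⟨F, hF, hFB, fun P h hk => by rw [map_neg, mul_neg, neg_mul, hFs P h hk, neg_zero]⟩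

variable [PartialOrder A] [StarOrderedRing A]

theorem TracialTopRankZeroIn.exists_corner_near (hTR : TracialTopRankZeroIn B) {ε : ℝ} (hε : 0 < ε)
    {F : Set A} (hF : F.Finite) (hFB : F ⊆ B) {y : A} (hy : y ∈ B) (hy0 : y ≠ 0) :
    ∃ E : StarSubalgebra ℂ A, FiniteDimensional ℂ E ∧ E ≤ B ∧
      ∃ p ∈ E, IsStarProjection p ∧ p ≠ 0 ∧ (∀ z ∈ E, Commute p z) ∧
      (∀ x ∈ F, ‖p * x - x * p‖ < ε) ∧ (∀ x ∈ F, ∃ d ∈ E, ‖p * x * p - d‖ < ε) ∧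
      ∃ s ∈ B, ‖s * y * star (s * y) - (1 - p)‖ < ε := by
  obtain ⟨p, -, hp, hp0, E, hEB, hfd, hpE, hEp, hcomm, hd, hsub⟩ :=
    hTR ε hε hF.toFinset (by simpa using hFB) (y * star y) (mul_mem hy (star_mem hy))
      (mul_star_self_nonneg y) (by simpa using hy0)
  simp only [Set.Finite.mem_toFinset] at hcomm hd
  have hpE' : StarAlgebra.adjoin ℂ (E : Set A) ≤ StarSubalgebra.centralizer ℂ {p} := by
    refine StarAlgebra.adjoin_le fun z hz => (StarSubalgebra.mem_centralizer_iff ℂ).2 ?_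
    rintro _ rfl
    simp only [← hp.1, (hEp z hz).1, (hEp z hz).2, and_self]
  exact ⟨StarAlgebra.adjoin ℂ (E : Set A), finiteDimensional_adjoin E, StarAlgebra.adjoin_le hEB, p,
    StarAlgebra.subset_adjoin ℂ _ hpE, isProjection_iff_isStarProjection.1 hp, hp0,
    fun z hz => ((StarSubalgebra.mem_centralizer_iff ℂ).1 (hpE' hz) p rfl).1, hcomm,
    fun x hx => (hd x hx).imp fun d h => ⟨StarAlgebra.subset_adjoin ℂ _ h.1, h.2⟩,
    hsub.exists_norm_sub_lt hε⟩

theorem TracialTopRankZeroIn.exists_asymptotic_corner (hTR : TracialTopRankZeroIn B)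
    {F : Set (AsymptoticAlgebra A)} (hF : F.Finite)
    (hFB : ∀ X ∈ F, X ∈ sequencesInSubalgebra fun _ => B) {k : A} (hk : 1 ∈ idealSpan B k) {y : A}
    (hy : y ∈ B) (hy0 : y ≠ 0) :
    ∃ E : ℕ → StarSubalgebra ℂ A, (∀ n, FiniteDimensional ℂ (E n)) ∧ (∀ n, E n ≤ B) ∧
      ∃ P ∈ sequencesInSubalgebra E, IsStarProjection P ∧
      (∀ X ∈ sequencesInSubalgebra E, Commute P X) ∧
      (∀ X ∈ F, Commute P X ∧ P * X * P ∈ sequencesInSubalgebra E) ∧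
      P * const k * P ≠ 0 ∧
      ∃ S ∈ sequencesIn fun _ => {b | ∃ z ∈ B, b = z * y}, S * star S = 1 - P := by
  obtain ⟨K, hK, hKB, hKP⟩ := exists_finite_forall_commute_mul_mul_eq_zero hk
  choose! x hxB hx using hFB
  have hδ (n : ℕ) : 0 < 1 / ((n : ℝ) + 1) := Nat.one_div_pos_of_nat
  have hlim := tendsto_one_div_add_atTop_nhds_zero_nat (𝕜 := ℝ)
  choose E hfd hEB p hpE hp hp0 hpE' hcomm hcorner s hs hsp using fun n : ℕ =>
    hTR.exists_corner_near (hδ n) ((hF.image fun X => x X n).union hK)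
      (Set.union_subset (Set.image_subset_iff.2 fun X hX => hxB X hX n) hKB) hy hy0
  obtain ⟨P, hP⟩ := exists_ofSeq_of_norm_le fun n => IsStarProjection.norm_le (p n) (hp n)
  obtain rfl : ⇑P = p := funext hP
  have hPP := isStarProjection_ofSeq hp
  obtain ⟨S, hS, hSP⟩ := exists_ofSeq_mul_star_eq (x := 1 - P) hlim fun n => (hsp n).le
  have hPF (X) (hX : X ∈ F) : Commute (ofSeq P) X := by
    conv_rhs => rw [← hx X hX]
    exact commute_ofSeq_of_norm_sub_le hlim fun n => (hcomm n _ (.inl ⟨X, hX, rfl⟩)).le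
  have hPK (a) (ha : a ∈ K) : Commute (ofSeq P) (const a) :=
    commute_ofSeq_of_norm_sub_le hlim fun n => (hcomm n a (.inr ha)).le
  refine ⟨E, hfd, hEB, ofSeq P, ofSeq_mem_sequencesIn hpE, hPP, ?_, fun X hX => ⟨hPF X hX, ?_⟩,
    fun hk => ?_, ofSeq S, ofSeq_mem_sequencesIn fun n => ⟨s n, hs n, hS n⟩, ?_⟩
  · rintro _ ⟨z, hz, rfl⟩
    exact commute_ofSeq fun n => hpE' n _ (hz n)
  · choose d hdE hd using fun n => hcorner n (x X n) (.inl ⟨X, hX, rfl⟩)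
    obtain ⟨D, hD, hDX⟩ := exists_ofSeq_eq_ofSeq_of_norm_sub_le (x := P * x X * P) (y := d) hlim
      fun n => (norm_sub_rev _ _).trans_le (hd n).le
    exact ⟨D, fun n => hD n ▸ hdE n, by rw [hDX, map_mul, map_mul, hx X hX]⟩
  · have h := hKP _ hPK hk
    rw [map_one, mul_one, hPP.isIdempotentElem, ← map_zero ofSeq, ofSeq_eq_ofSeq_iff] at h
    obtain ⟨n, hn⟩ := (h.eventually_lt_const one_pos).exists
    exact hp0 n <| eq_zero_of_isIdempotentElem_of_norm_lt_one (hp n).isIdempotentElem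
      (by simpa using hn)
  · rw [hSP, map_sub, map_one]

end TracialRankZero

section CornerProjections

variable {A : Type*} [CStarAlgebra A] {B : StarSubalgebra ℂ A}

theorem const_mem_sequencesInSubalgebra {b : A} (hb : b ∈ B) :
    const b ∈ sequencesInSubalgebra fun _ => B :=
  const_mem_sequencesIn fun _ => hb

variable [PartialOrder A] [StarOrderedRing A]

theorem exists_isStarProjection_ne_zero_factor (hTR : TracialTopRankZeroIn B) {k : A} (hk : k ∈ B)
    (h1 : 1 ∈ idealSpan B k) (hk0 : k ≠ 0) :
    ∃ F ∈ sequencesIn fun _ => (B : Set A) ∩ {p | IsStarProjection p}, F ≠ 0 ∧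
      (∃ M, F = M * const k) ∧
      ∃ V ∈ sequencesIn fun _ => (unitary A : Set A), ∃ M', V * F = const k * M' := by
  obtain ⟨E, _, hEB, P, -, hP', -, hPF, hPk, -⟩ :=
    hTR.exists_asymptotic_corner (Set.finite_singleton (const k))
      (by rintro _ rfl; exact const_mem_sequencesInSubalgebra hk) h1 hk hk0
  obtain ⟨hkP, hkE⟩ := hPF _ rfl
  obtain ⟨V, ⟨v, hv, rfl⟩, T, hT, hVT⟩ := exists_polar hkE
  have hVV : star (ofSeq v) * ofSeq v = 1 := Unitary.star_mul_self_of_mem <|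
    mem_unitary_of_mem_sequencesIn (fun _ => Set.inter_subset_right) (ofSeq_mem_sequencesIn hv)
  have hT0 : T ≠ 0 := by
    rintro rfl
    exact hPk (hVT ▸ mul_zero _)
  obtain ⟨c, hc, hTc⟩ : ∃ c > 0, T ∉ sequencesIn fun _ => Metric.closedBall 0 c := by
    by_contra! h
    exact hT0 (eq_zero_of_forall_mem_closedBall h)
  obtain ⟨F, hF, K, -, hF', -, hKF, hKT, hTF⟩ := exists_asymptotic_cutoff hT hc
  have hPX : P * const k * P = P * const k := by
    rw [mul_assoc, ← hkP.eq, ← mul_assoc, hP'.isIdempotentElem.eq]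
  refine ⟨F, sequencesIn_mono (fun n => Set.inter_subset_inter_left _ (hEB n))
    (mem_sequencesIn_isStarProjection hF hF'), ?_, ⟨K * K * star (ofSeq v) * P, ?_⟩, ofSeq v,
    ofSeq_mem_sequencesIn fun n => (hv n).2, P * K * K, ?_⟩
  · rintro rfl
    exact hTc (by simpa using hTF)
  · rw [mul_assoc, ← hPX, ← hVT, mul_assoc, ← mul_assoc _ _ T, hVV, one_mul, mul_assoc, ← hKT,
      ← mul_assoc, hKF]
  · rw [← hKF, ← hKT, mul_assoc, ← mul_assoc, hVT, hPX, hkP.eq]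
    simp only [mul_assoc]

theorem exists_isStarProjection_near_factor (hTR : TracialTopRankZeroIn B) {k : A} (hk : k ∈ B)
    (h1 : 1 ∈ idealSpan B k) (hk0 : k ≠ 0) {ε : ℝ} (hε : 0 < ε) :
    ∃ r ∈ B, IsStarProjection r ∧ r ≠ 0 ∧ (∃ m, ‖r - m * k‖ ≤ ε) ∧
      ∃ v ∈ unitary A, ∃ m, ‖v * r - k * m‖ ≤ ε := by
  obtain ⟨_, ⟨f, hf, rfl⟩, hF0, ⟨M, hM⟩, _, ⟨v, hv, rfl⟩, M', hM'⟩ :=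
    exists_isStarProjection_ne_zero_factor hTR hk h1 hk0
  obtain ⟨m, rfl⟩ := ofSeq_surjective M
  obtain ⟨m', rfl⟩ := ofSeq_surjective M'
  have hfm := (ofSeq_eq_ofSeq_iff (y := m * .const ℕ k)).1 (hM.trans (map_mul ofSeq _ _).symm)
  have hvf := (ofSeq_eq_ofSeq_iff (x := v * f) (y := .const ℕ k * m')).1
    ((map_mul ofSeq _ _).trans (hM'.trans (map_mul ofSeq _ _).symm))
  have hf0 : ∃ᶠ n in atTop, f n ≠ 0 := fun h => hF0 <| by
    rw [← map_zero ofSeq, ofSeq_eq_ofSeq_iff]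
    exact tendsto_const_nhds.congr' (h.mono fun n hn => by simp [not_not.1 hn])
  obtain ⟨n, hn0, hn1, hn2⟩ := (hf0.and_eventually ((hfm.eventually_le_const hε).and
    (hvf.eventually_le_const hε))).exists
  exact ⟨f n, (hf n).1, (hf n).2, hn0, ⟨m n, hn1⟩, v n, hv n, m' n, hn2⟩

end CornerProjections

section ApproximateKernel

variable {A : Type*} [CStarAlgebra A] [PartialOrder A] [StarOrderedRing A] {B : StarSubalgebra ℂ A}
  {a : A} {ε : ℝ}

theorem exists_nonneg_norm_eq_one_norm_mul_le (ha : ¬IsUnit (a * star a)) (hε : 0 < ε) :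
    ∃ x : A, 0 ≤ x ∧ ‖x‖ = 1 ∧ ‖x * a‖ ≤ ε := by
  have hnonneg : 0 ≤ a * star a := mul_star_self_nonneg a
  have hspec : ∀ t ∈ spectrum ℝ (a * star a), 0 ≤ t := fun t ht =>
    spectrum_nonneg_of_nonneg hnonneg ht
  let f : ℝ → ℝ := fun t => max 0 (1 - t / ε ^ 2)
  have hf : Continuous f := by fun_prop
  have hf0 t : 0 ≤ f t := le_max_left _ _
  have hf1 {t : ℝ} (ht : 0 ≤ t) : f t ≤ 1 := max_le zero_le_one (sub_le_self 1 (by positivity))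
  have hfε {t : ℝ} (ht : ε ^ 2 ≤ t) : f t = 0 :=
    max_eq_left (sub_nonpos.2 ((one_le_div (by positivity)).2 ht))
  have hx : 0 ≤ cfc f (a * star a) := cfc_nonneg fun t _ => hf0 t
  refine ⟨_, hx, le_antisymm (norm_cfc_le zero_le_one fun t ht => ?_) ?_, ?_⟩
  · exact (Real.norm_of_nonneg (hf0 t)).trans_le (hf1 (hspec t ht))
  · simpa [f] using
      norm_apply_le_norm_cfc f (a * star a) ((spectrum.zero_mem_iff ℝ).2 ha) hf.continuousOn
  · have hxa : (cfc f (a * star a) * a) * star (cfc f (a * star a) * a) =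
        cfc (fun t => f t * t * f t) (a * star a) := by
      rw [cfc_mul (fun t => f t * t) f _ (by fun_prop) (by fun_prop),
        cfc_mul f (fun t => t) _ (by fun_prop) (by fun_prop), cfc_id' ℝ (a * star a), star_mul,
        (IsSelfAdjoint.of_nonneg hx).star_eq]
      simp only [mul_assoc]
    refine le_of_sq_le_sq ?_ hε.le
    rw [sq, ← CStarRing.norm_self_mul_star, hxa]
    refine norm_cfc_le (by positivity) fun t ht => ?_
    have ht0 := hspec t ht
    rw [Real.norm_of_nonneg (mul_nonneg (mul_nonneg (hf0 t) ht0) (hf0 t))]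
    rcases le_total t (ε ^ 2) with h | h
    · calc f t * t * f t ≤ 1 * ε ^ 2 * 1 := by
            gcongr
            exacts [hf1 ht0, hf1 ht0]
        _ = ε ^ 2 := by ring
    · rw [hfε h, mul_zero]
      positivity

theorem IsCentrallyLarge.exists_nonneg_half_le_norm_norm_mul_le (hl : IsCentrallyLarge B)
    (ha : ¬IsUnit (a * star a)) (hε : 0 < ε) : ∃ b ∈ B, 0 ≤ b ∧ 1 / 2 ≤ ‖b‖ ∧ ‖b * a‖ ≤ ε := by
  have hA : Nontrivial A := not_subsingleton_iff_nontrivial.1 fun _ => ha (isUnit_of_subsingleton _)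
  obtain ⟨e, he, he8, heε⟩ : ∃ e > 0, e ≤ 1 / 8 ∧ 2 * (e * ‖a‖ + e) ≤ ε := by
    refine ⟨min (1 / 8) (ε / (2 * (‖a‖ + 1))), by positivity, min_le_left _ _, ?_⟩
    have := (le_div_iff₀ (by positivity)).1 (min_le_right (1 / 8) (ε / (2 * (‖a‖ + 1))))
    linarith
  obtain ⟨x, hx, hx1, hxa⟩ := exists_nonneg_norm_eq_one_norm_mul_le ha he
  obtain ⟨c, g, -, hg0, hg1, hcx, hcB, -, -, hgx, -⟩ :=
    hl 1 (fun _ => x) e he x hx hx1 1 (one_mem B) zero_le_one one_ne_zero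
  have hcx := (hcx 0).le
  have hg : ‖1 - g‖ ≤ 1 := CStarAlgebra.norm_le_one_iff_of_nonneg _ (sub_nonneg.2 hg1) |>.2
    (sub_le_self 1 hg0)
  set b := (1 - g) * c 0
  have hbx : b = (1 - g) * (c 0 - x) + (1 - g) * x := by rw [← mul_add, sub_add_cancel]
  have hb2 : ‖b‖ ≤ 2 := by
    rw [hbx]
    linarith [norm_add_le_of_le (norm_mul_le_of_le hg hcx) (norm_mul_le_of_le hg hx1.le)]
  have hb : 1 - 2 * e ≤ ‖b‖ := by
    have h1 : ‖(1 - g) * x‖ ≤ ‖b‖ + 1 * e := by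
      rw [← sub_eq_of_eq_add' hbx]
      exact norm_sub_le_of_le le_rfl (norm_mul_le_of_le hg hcx)
    linarith [norm_mul_le_of_le h1 hg]
  have hba : ‖b * a‖ ≤ 1 * (e * ‖a‖ + e) := by
    rw [mul_assoc, ← sub_add_cancel (c 0) x, add_mul]
    exact norm_mul_le_of_le hg (norm_add_le_of_le (norm_mul_le_of_le hcx le_rfl) hxa)
  refine ⟨star b * b, mul_mem (star_mem (hcB 0)) (hcB 0), star_mul_self_nonneg b, ?_, ?_⟩
  · rw [CStarRing.norm_star_mul_self]
    nlinarith
  · rw [mul_assoc]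
    linarith [norm_mul_le_of_le ((norm_star b).trans_le hb2) hba]

theorem exists_mul_eq_zero_one_sub_mul (hB : IsClosed (B : Set A)) {b : A} (hbB : b ∈ B)
    (hb : 0 ≤ b) {t : ℝ} (ht : 0 < t) (htb : t < ‖b‖) :
    ∃ k ∈ B, k ≠ 0 ∧ ∃ w : A, ‖w‖ ≤ t⁻¹ ∧ IsSelfAdjoint (1 - w * b) ∧ ‖1 - w * b‖ ≤ 1 ∧
      k * (1 - w * b) = 0 ∧ (1 - w * b) * k = 0 := by
  have : Nontrivial A := ⟨b, 0, norm_ne_zero_iff.1 (ht.trans htb).ne'⟩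
  have hspec : ∀ s ∈ spectrum ℝ b, 0 ≤ s := fun s hs => spectrum_nonneg_of_nonneg hb hs
  have hmax s : 0 < max s t := ht.trans_le (le_max_right s t)
  let u : ℝ → ℝ := fun s => (max s t)⁻¹
  let v : ℝ → ℝ := fun s => max (s - t) 0
  have hu : Continuous u := Continuous.inv₀ (by fun_prop) fun s => (hmax s).ne'
  have hv : Continuous v := by fun_prop
  have hu0 s : 0 ≤ u s := inv_nonneg.2 (hmax s).le
  have hvu s : v s * (1 - u s * s) = 0 := by
    rcases le_total s t with h | h
    · rw [show v s = 0 from max_eq_right (sub_nonpos.2 h), zero_mul]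
    · rw [show u s = s⁻¹ by simp only [u, max_eq_left h], inv_mul_cancel₀ (ht.trans_le h).ne',
        sub_self, mul_zero]
  have hub : 1 - cfc u b * b = cfc (fun s => 1 - u s * s) b := by
    rw [cfc_sub (fun _ => (1 : ℝ)) (fun s => u s * s) b (by fun_prop) (by fun_prop),
      cfc_mul u (fun s => s) b (by fun_prop) (by fun_prop), cfc_id' ℝ b, cfc_const_one ℝ b]
  have hvub : cfc v b * (1 - cfc u b * b) = 0 := by
    rw [hub, ← cfc_mul v _ b (by fun_prop) (by fun_prop)]
    simp only [hvu, cfc_const_zero]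
  refine ⟨cfc v b, cfc_mem v hbB, fun h => ?_, cfc u b, norm_cfc_le (by positivity) fun s _ => ?_,
    hub ▸ cfc_predicate _ _, hub ▸ norm_cfc_le zero_le_one fun s hs => ?_, hvub, ?_⟩
  · have := norm_apply_le_norm_cfc v b (CStarAlgebra.norm_mem_spectrum_of_nonneg hb)
      hv.continuousOn
    rw [h, norm_zero, norm_le_zero_iff] at this
    exact (lt_max_of_lt_left (sub_pos.2 htb)).ne' this
  · rw [Real.norm_of_nonneg (hu0 s)]
    exact inv_anti₀ ht (le_max_right s t)
  · have h1 : u s * s ≤ 1 := (inv_mul_le_one₀ (hmax s)).2 (le_max_left s t)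
    rw [Real.norm_of_nonneg (sub_nonneg.2 h1)]
    exact sub_le_self 1 (mul_nonneg (hu0 s) (hspec s hs))
  · rw [← hvub, hub]
    exact cfc_commute_cfc ..

theorem IsCentrallyLarge.exists_mul_eq_zero_norm_mul_sub_le (hl : IsCentrallyLarge B)
    (hB : IsClosed (B : Set A)) (ha : ¬IsUnit (a * star a)) (hε : 0 < ε) :
    ∃ k ∈ B, k ≠ 0 ∧ ∃ n : A, IsSelfAdjoint n ∧ ‖n‖ ≤ 1 ∧ k * n = 0 ∧ n * k = 0 ∧
      ‖n * a - a‖ ≤ ε := by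
  obtain ⟨b, hbB, hb, hb1, hba⟩ :=
    hl.exists_nonneg_half_le_norm_norm_mul_le ha (show 0 < ε / 4 by positivity)
  obtain ⟨k, hkB, hk, w, hw, hsa, hn, hkn, hnk⟩ :=
    exists_mul_eq_zero_one_sub_mul hB hbB hb (t := 1 / 4) (by norm_num) (by linarith)
  refine ⟨k, hkB, hk, 1 - w * b, hsa, hn, hkn, hnk, ?_⟩
  rw [sub_mul, one_mul, sub_sub_cancel_left, norm_neg, mul_assoc]
  linarith [norm_mul_le_of_le hw hba]

end ApproximateKernel

section Corners

variable {A : Type*} [CStarAlgebra A] {B : StarSubalgebra ℂ A} {r : A}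

theorem exists_eq_smul_of_tendsto {x : A} {c d : ℕ → ℂ} {δ : ℝ}
    (hlim : Tendsto (fun n => ‖d n • x - c n • r‖) atTop (nhds 0)) (hδ : 0 < δ)
    (hd : ∀ᶠ n in atTop, δ ≤ ‖d n‖) : ∃ l : ℂ, x = l • r := by
  have hx : Tendsto (fun n => ((d n)⁻¹ * c n) • r) atTop (nhds x) := by
    have h0 := hlim.const_mul δ⁻¹
    rw [mul_zero] at h0
    refine tendsto_iff_norm_sub_tendsto_zero.2 <|
      squeeze_zero' (.of_forall fun _ => norm_nonneg _) ?_ h0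
    filter_upwards [hd] with n hn
    have hdn : d n ≠ 0 := norm_pos_iff.1 (hδ.trans_le hn)
    rw [norm_sub_rev, ← inv_smul_smul₀ hdn x, smul_inv_smul₀ hdn, mul_smul, ← smul_sub, norm_smul,
      norm_inv]
    gcongr
  have hcl : IsClosed ((ℂ ∙ r : Submodule ℂ A) : Set A) := Submodule.closed_of_finiteDimensional _
  obtain ⟨l, hl⟩ := Submodule.mem_span_singleton.1 <| hcl.mem_of_tendsto hx <|
    .of_forall fun n => Submodule.smul_mem _ _ (Submodule.mem_span_singleton_self r)
  exact ⟨l, hl.symm⟩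

theorem eventually_half_le_norm_of_tendsto {h : ℕ → A} {d : ℕ → ℂ} (hr : ‖r‖ ≤ 1)
    (hh : ∀ n, ‖h n‖ ≤ 1) (hhr : ∀ n : ℕ, 1 - 1 / ((n : ℝ) + 1) < ‖h n * r * h n‖)
    (hlim : Tendsto (fun n => ‖h n * r - d n • r‖) atTop (nhds 0)) :
    ∀ᶠ n in atTop, 1 / 2 ≤ ‖d n‖ := by
  have hquarter : (0 : ℝ) < 1 / 4 := by norm_num
  filter_upwards [hlim.eventually_le_const hquarter,
    tendsto_one_div_add_atTop_nhds_zero_nat.eventually_le_const hquarter] with n hn hn'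
  have hhn : ‖h n * r‖ ≤ 1 / 4 + ‖d n‖ := by
    simpa only [sub_add_cancel] using
      norm_add_le_of_le hn
        ((norm_smul_le _ r).trans (mul_le_of_le_one_right (norm_nonneg (d n)) hr))
  linarith [hhr n, norm_mul_le_of_le hhn (hh n)]

theorem IsCentrallyLarge.corner_eq_smul [PartialOrder A] [StarOrderedRing A]
    (hl : IsCentrallyLarge B) (hrB : r ∈ B) (hr : IsStarProjection r)
    (hsc : ∀ b ∈ B, ∃ c : ℂ, r * b * r = c • r) (a : A) : ∃ c : ℂ, r * a * r = c • r := by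
  rcases eq_or_ne r 0 with rfl | hr0
  · exact ⟨0, by simp⟩
  have hr1 : ‖r‖ = 1 := hr.norm_le.antisymm <| not_lt.1 fun h =>
    hr0 (eq_zero_of_isIdempotentElem_of_norm_lt_one hr.isIdempotentElem h)
  obtain ⟨g, -, -, hg, -, hgF, hgB, hgr⟩ := hl.exists_asymptotic_cutdown (Set.toFinite {a, r})
    hr.nonneg hr1 (one_mem B) (fun h => hr0 (by rw [← one_mul r, h, zero_mul]))
  obtain ⟨b, hb, hbg⟩ := hgB a (.inl rfl)
  choose c hc using fun n => hsc (b n) (hb n)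
  choose d hd using fun n => hsc (1 - g n) (sub_mem (one_mem B) (hg n).1)
  set R := BoundedContinuousFunction.const ℕ r
  have hR : Commute (1 - ofSeq g) (ofSeq R) := (Commute.one_left _).sub_left (hgF r (.inr rfl))
  have hRgR : ofSeq R * (1 - ofSeq g) * ofSeq R = (1 - ofSeq g) * ofSeq R := by
    rw [← hR.eq, mul_assoc]
    exact congrArg _ ((const.map_mul r r).symm.trans (congrArg const hr.isIdempotentElem.eq))
  have hd_lim : Tendsto (fun n => ‖(1 - g n) * r - d n • r‖) atTop (nhds 0) := by
    refine (ofSeq_eq_ofSeq_iff.1 (?_ : ofSeq ((1 - g) * R) = ofSeq (R * (1 - g) * R))).congr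
      fun n => congrArg (‖_ - ·‖) (hd n)
    simpa only [map_mul, map_sub, map_one] using hRgR.symm
  have hcd_lim : Tendsto (fun n => ‖d n • (r * a * r) - c n • r‖) atTop (nhds 0) := by
    refine (ofSeq_eq_ofSeq_iff.1 (?_ : ofSeq (R * (1 - g) * R * (.const ℕ a * R)) =
      ofSeq (R * b * R))).congr fun n => congrArg₂ (‖· - ·‖) ?_ (hc n)
    · rw [map_mul, map_mul, map_mul, map_sub, map_one, map_mul, map_mul, map_mul, hbg, hRgR, hR.eq]
      simp only [mul_assoc]
      rfl
    · calc r * (1 - g n) * r * (a * r) = d n • r * (a * r) := congrArg (· * _) (hd n)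
        _ = d n • (r * a * r) := by rw [smul_mul_assoc, mul_assoc]
  have hgn n : ‖1 - g n‖ ≤ 1 := CStarAlgebra.norm_le_one_iff_of_nonneg _ (sub_nonneg.2 (hg n).2.2)
    |>.2 (sub_le_self 1 (hg n).2.1)
  exact exists_eq_smul_of_tendsto hcd_lim one_half_pos
    (eventually_half_le_norm_of_tendsto hr1.le hgn hgr hd_lim)

theorem exists_finiteDimensional_forall_mul_mul_mem (hsc : ∀ a : A, ∃ c : ℂ, r * a * r = c • r)
    {s t : A} (hs : s ∈ idealSpan (⊤ : StarSubalgebra ℂ A) r)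
    (ht : t ∈ idealSpan (⊤ : StarSubalgebra ℂ A) r) :
    ∃ W : Submodule ℂ A, FiniteDimensional ℂ W ∧ ∀ a, s * a * t ∈ W := by
  induction hs using AddSubgroup.closure_induction with
  | mem s hs =>
    obtain ⟨x, -, y, -, rfl⟩ := hs
    induction ht using AddSubgroup.closure_induction with
    | mem t ht =>
      obtain ⟨z, -, w, -, rfl⟩ := ht
      refine ⟨ℂ ∙ (x * r * w), inferInstance, fun a => ?_⟩
      obtain ⟨c, hc⟩ := hsc (y * a * z)
      refine Submodule.mem_span_singleton.2 ⟨c, ?_⟩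
      calc c • (x * r * w) = x * (r * (y * a * z) * r) * w := by
            rw [hc, mul_smul_comm, smul_mul_assoc]
        _ = x * r * y * a * (z * r * w) := by simp only [mul_assoc]
    | zero => exact ⟨⊥, inferInstance, by simp⟩
    | add t t' _ _ h h' =>
      obtain ⟨W, _, hW⟩ := h
      obtain ⟨W', _, hW'⟩ := h'
      exact ⟨W ⊔ W', inferInstance, fun a => mul_add (_ * a) t t' ▸
        Submodule.add_mem_sup (hW a) (hW' a)⟩
    | neg t _ h =>
      obtain ⟨W, hW, h⟩ := h
      exact ⟨W, hW, fun a => mul_neg (_ * a) t ▸ W.neg_mem (h a)⟩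
  | zero => exact ⟨⊥, inferInstance, by simp⟩
  | add s s' _ _ h h' =>
    obtain ⟨W, _, hW⟩ := h
    obtain ⟨W', _, hW'⟩ := h'
    refine ⟨W ⊔ W', inferInstance, fun a => ?_⟩
    rw [add_mul, add_mul]
    exact Submodule.add_mem_sup (hW a) (hW' a)
  | neg s _ h =>
    obtain ⟨W, hW, h⟩ := h
    refine ⟨W, hW, fun a => ?_⟩
    rw [neg_mul, neg_mul]
    exact W.neg_mem (h a)

theorem finiteDimensional_of_corner_eq_smul
    (hr : 1 ∈ idealSpan (⊤ : StarSubalgebra ℂ A) r)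
    (hsc : ∀ a : A, ∃ c : ℂ, r * a * r = c • r) : FiniteDimensional ℂ A := by
  obtain ⟨W, hW, h⟩ := exists_finiteDimensional_forall_mul_mul_mem hsc hr hr
  obtain rfl : W = ⊤ := eq_top_iff.2 fun a _ => by simpa using h a
  exact Submodule.topEquiv.finiteDimensional

open ComplexStarModule in
theorem exists_isSelfAdjoint_corner_ne_smul (hrB : r ∈ B) (hr : IsStarProjection r)
    (h : ¬∀ b ∈ B, ∃ c : ℂ, r * b * r = c • r) :
    ∃ x ∈ B, IsSelfAdjoint x ∧ x * r = x ∧ r * x = x ∧ ∀ c : ℝ, x ≠ c • r := by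
  contrapose! h
  have hre b (hb : b ∈ B) : ∃ c : ℝ, r * (ℜ b : A) * r = c • r := by
    have hbB : (ℜ b : A) ∈ B := by
      rw [realPart_apply_coe, ← Complex.coe_smul]
      exact SMulMemClass.smul_mem _ (add_mem hb (star_mem hb))
    refine h _ (mul_mem (mul_mem hrB hbB) hrB) ?_ ?_ ?_
    · simpa only [hr.isSelfAdjoint.star_eq] using (ℜ b).2.conjugate r
    · rw [mul_assoc, hr.isIdempotentElem.eq]
    · rw [← mul_assoc, ← mul_assoc, hr.isIdempotentElem.eq]
  intro b hb
  obtain ⟨c, hc⟩ := hre b hb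
  obtain ⟨d, hd⟩ := hre (Complex.I • b) (SMulMemClass.smul_mem _ hb)
  rw [realPart_I_smul, NegMemClass.coe_neg, mul_neg, neg_mul, neg_eq_iff_eq_neg] at hd
  refine ⟨c - Complex.I * d, ?_⟩
  rw [← realPart_add_I_smul_imaginaryPart b, mul_add, add_mul, hc, mul_smul_comm, smul_mul_assoc,
    hd, sub_smul, mul_smul, Complex.coe_smul, Complex.coe_smul, smul_neg, sub_eq_add_neg]

theorem mul_eq_self_of_mul_self_mul_one_sub {k : A} (hk : IsSelfAdjoint k)
    (h : k * k * (1 - r) = 0) : k * r = k := by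
  have hkr : k * (1 - r) = 0 := CStarRing.star_mul_self_eq_zero_iff _ |>.1 <| by
    rw [star_mul, hk.star_eq, mul_assoc, ← mul_assoc k, h, mul_zero]
  rwa [mul_sub, mul_one, sub_eq_zero, eq_comm] at hkr

variable [PartialOrder A] [StarOrderedRing A]

theorem exists_not_le_smul_not_smul_le (hr : IsStarProjection r) {x : A} (hx : IsSelfAdjoint x)
    (hxr : x * r = x) (hrx : r * x = x) (hne : ∀ c : ℝ, x ≠ c • r) :
    ∃ c : ℝ, ¬x ≤ c • r ∧ ¬c • r ≤ x := by
  by_contra! h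
  have hcont : Continuous fun c : ℝ => c • r := by fun_prop
  have hconj {y : A} : star r * y * r = r * y * r := by rw [hr.isSelfAdjoint.star_eq]
  have hscalar (c : ℝ) : r * algebraMap ℝ A c * r = c • r := by
    rw [Algebra.algebraMap_eq_smul_one, mul_smul_comm, mul_one, smul_mul_assoc,
      hr.isIdempotentElem.eq]
  have hle : x ≤ ‖x‖ • r := by
    have := star_left_conjugate_le_conjugate hx.le_algebraMap_norm_self r
    rwa [hconj, hconj, hrx, hxr, hscalar] at this
  have hge : -‖x‖ • r ≤ x := by
    have := star_left_conjugate_le_conjugate hx.neg_algebraMap_norm_le_self r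
    rwa [hconj, hconj, hrx, hxr, ← map_neg, hscalar] at this
  obtain ⟨c, -, hc, hc'⟩ := isPreconnected_closed_iff.1 isPreconnected_univ
    {c : ℝ | x ≤ c • r} {c : ℝ | c • r ≤ x} (isClosed_le continuous_const hcont)
    (isClosed_le hcont continuous_const) (fun c _ => or_iff_not_imp_left.2 (h c))
    ⟨‖x‖, trivial, hle⟩ ⟨-‖x‖, trivial, hge⟩
  exact hne c (le_antisymm hc hc')

theorem exists_orthogonal_pair_of_not_forall_corner_eq_smul (hB : IsClosed (B : Set A))
    (hrB : r ∈ B) (hr : IsStarProjection r) (h : ¬∀ b ∈ B, ∃ c : ℂ, r * b * r = c • r) :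
    ∃ k₁ ∈ B, ∃ k₂ ∈ B, k₁ ≠ 0 ∧ k₂ ≠ 0 ∧ IsSelfAdjoint k₁ ∧ IsSelfAdjoint k₂ ∧
      k₁ * k₂ = 0 ∧ k₁ * r = k₁ ∧ k₂ * r = k₂ := by
  obtain ⟨x, hxB, hx, hxr, hrx, hne⟩ := exists_isSelfAdjoint_corner_ne_smul hrB hr h
  obtain ⟨c, hc, hc'⟩ := exists_not_le_smul_not_smul_le hr hx hxr hrx hne
  set y := x - c • r
  have hy : IsSelfAdjoint y := hx.sub ((IsSelfAdjoint.all c).smul hr.isSelfAdjoint)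
  have hy_eq : y = y⁺ - y⁻ := (CFC.posPart_sub_negPart y hy).symm
  have hyB : y ∈ B := sub_mem hxB (Complex.coe_smul c r ▸ SMulMemClass.smul_mem _ hrB)
  have hyr : y * (1 - r) = 0 := by
    rw [mul_sub, mul_one, sub_mul, hxr, smul_mul_assoc, hr.isIdempotentElem.eq, sub_self]
  have habsorb {k k' : A} (hk : 0 ≤ k) (hkk' : k * k' = 0) (hyk : y = k - k' ∨ y = k' - k) :
      k * r = k := by
    refine mul_eq_self_of_mul_self_mul_one_sub (.of_nonneg hk) ?_
    rcases hyk with h | h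
    · rw [← sub_zero (k * k), ← hkk', ← mul_sub, ← h, mul_assoc, hyr, mul_zero, hkk']
    · rw [← neg_eq_zero, ← neg_mul, ← zero_sub, ← hkk', ← mul_sub, ← h, mul_assoc, hyr, mul_zero,
        hkk']
  refine ⟨y⁺, ?_, y⁻, ?_, ?_, ?_, .of_nonneg (CFC.posPart_nonneg y),
    .of_nonneg (CFC.negPart_nonneg y), CFC.posPart_mul_negPart y,
    habsorb (CFC.posPart_nonneg y) (CFC.posPart_mul_negPart y) (.inl hy_eq),
    habsorb (CFC.negPart_nonneg y) (CFC.negPart_mul_posPart y) (.inr hy_eq)⟩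
  · rw [CFC.posPart_def]
    exact cfcₙ_mem _ hyB
  · rw [CFC.negPart_def]
    exact cfcₙ_mem _ hyB
  · rw [Ne, CFC.posPart_eq_zero_iff y hy, sub_nonpos]
    exact hc
  · rw [Ne, CFC.negPart_eq_zero_iff y hy, sub_nonneg]
    exact hc'

theorem IsCentrallyLarge.exists_orthogonal_pair_corner (hl : IsCentrallyLarge B)
    (hs : IsSimpleCStarAlgebra A) (hinf : ¬FiniteDimensional ℂ A) (hB : IsClosed (B : Set A))
    (hrB : r ∈ B) (hr : IsStarProjection r) (hr0 : r ≠ 0) :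
    ∃ k₁ ∈ B, ∃ k₂ ∈ B, k₁ ≠ 0 ∧ k₂ ≠ 0 ∧ IsSelfAdjoint k₁ ∧ IsSelfAdjoint k₂ ∧
      k₁ * k₂ = 0 ∧ k₁ * r = k₁ ∧ k₂ * r = k₂ :=
  exists_orthogonal_pair_of_not_forall_corner_eq_smul hB hrB hr fun hsc => hinf <|
    finiteDimensional_of_corner_eq_smul (hs.one_mem_idealSpan_top hr0)
      (hl.corner_eq_smul hrB hr hsc)

end Corners

section ProperIsometry

theorem corner_mul_corner {Q : Type*} [Semigroup Q] {p x : Q} (hp : IsIdempotentElem p)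
    (hx : Commute p x) (y : Q) : p * x * p * (p * y * p) = p * (x * y) * p := by
  rw [hx.eq, mul_assoc x, hp.eq, ← mul_assoc, ← mul_assoc, mul_assoc x, hp.eq, ← hx.eq,
    mul_assoc p x]

theorem corner_one_sub_mul_one_sub {Q : Type*} [Ring Q] {p x : Q} (hp : IsIdempotentElem p)
    (hx : Commute p x) :
    p * ((1 - x) * (1 - x)) * p = p - p * x * p * (2 - p * x * p) := by
  have hpx : p * x * p * (p * x * p) = p * (x * x) * p := corner_mul_corner hp hx x
  simp only [mul_sub, sub_mul, mul_one, one_mul, hp.eq, mul_two, hpx]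
  abel

theorem mul_eq_one_of_corner {Q : Type*} [Ring Q] {r m c : Q} (hr : IsIdempotentElem r)
    (hmc : m * c = r) (hm : m * r = m) (hc : r * c = c) : (m + (1 - r)) * (c + (1 - r)) = 1 := by
  have h₁ : m * (1 - r) = 0 := by rw [mul_sub, mul_one, hm, sub_self]
  have h₂ : (1 - r) * c = 0 := by rw [sub_mul, one_mul, hc, sub_self]
  rw [add_mul, mul_add, mul_add, hmc, h₁, h₂, hr.one_sub.eq, add_zero, zero_add, add_sub_cancel]

theorem mul_polar_mul_eq_self {Q : Type*} [Ring Q] [StarRing Q] {p r n v t w : Q}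
    (hpv : Commute p v) (hv : v ∈ unitary Q) (ht : IsSelfAdjoint t) (hvt : v * t = w)
    (htt : t * t = p - n * star n * (2 - n * star n)) (hrw : r * w = 0) (hrp : r * p = r)
    (hr : IsIdempotentElem r) :
    r * v * n * (star n * (2 - n * star n) * star v * r) = r := by
  have hww : v * (t * t) * star v = w * star w := by
    rw [← hvt, star_mul, ht.star_eq]
    simp only [mul_assoc]
  have hvpv : v * p * star v = p := by
    rw [← hpv.eq, mul_assoc, Unitary.mul_star_self_of_mem hv, mul_one]
  calc r * v * n * (star n * (2 - n * star n) * star v * r)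
      = r * (v * (n * star n * (2 - n * star n)) * star v) * r := by simp only [mul_assoc]
    _ = r * (p - w * star w) * r := by
        rw [← sub_sub_cancel p (n * star n * (2 - n * star n)), ← htt, mul_sub, sub_mul, hww, hvpv]
    _ = r := by rw [mul_sub, hrp, ← mul_assoc, hrw, zero_mul, sub_zero, hr.eq]

variable {A : Type*} [CStarAlgebra A]

theorem eq_zero_of_mul_eq_zero_of_corner {E : ℕ → StarSubalgebra ℂ A}
    [∀ n, FiniteDimensional ℂ (E n)] {R M C K : AsymptoticAlgebra A}
    (hR : R ∈ sequencesInSubalgebra E) (hM : M ∈ sequencesInSubalgebra E) (hRR : IsIdempotentElem R)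
    (hMC : M * C = R) (hMR : M * R = M) (hRC : R * C = C) (hMK : M * K = 0) (hRK : R * K = K) :
    K = 0 := by
  have hinv := mul_eq_one_comm_of_mem (add_mem hM (sub_mem (one_mem _) hR))
    (mul_eq_one_of_corner hRR hMC hMR hRC)
  rw [← one_mul K, ← hinv, mul_assoc, add_mul M, hMK, sub_mul 1 R, one_mul, hRK, sub_self,
    add_zero, mul_zero]

theorem corner_eq_zero_of_mul_eq_zero [PartialOrder A] [StarOrderedRing A]
    {E : ℕ → StarSubalgebra ℂ A} [∀ n, FiniteDimensional ℂ (E n)]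
    {P W N R K : AsymptoticAlgebra A} (hP : IsStarProjection P)
    (hPE : ∀ X ∈ sequencesInSubalgebra E, Commute P X)
    (hW : Commute P W ∧ P * W * P ∈ sequencesInSubalgebra E)
    (hN : Commute P N ∧ P * N * P ∈ sequencesInSubalgebra E)
    (hR : Commute P R ∧ P * R * P ∈ sequencesInSubalgebra E) (hR' : IsStarProjection R)
    (hWW : star W * W = (1 - N * star N) * (1 - N * star N)) (hRW : R * W = 0) (hNR : N * R = N)
    (hNK : N * K = 0) (hRK : R * K = K) : P * K * P = 0 := by
  obtain ⟨V, hV, T, hT, hVT⟩ := exists_polar hW.2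
  have hVE : V ∈ sequencesInSubalgebra E := sequencesIn_mono (fun _ => Set.inter_subset_left) hV
  replace hV := mem_unitary_of_mem_sequencesIn (fun _ => Set.inter_subset_right) hV
  replace hT : IsSelfAdjoint T :=
    isSelfAdjoint_of_mem_sequencesIn (fun _ _ h => IsSelfAdjoint.of_nonneg h.2) hT
  have hPP := hP.isIdempotentElem
  have hstar (X : AsymptoticAlgebra A) : star (P * X * P) = P * star X * P := by
    rw [star_mul, star_mul, hP.isSelfAdjoint.star_eq, mul_assoc]
  have hPN' : Commute P (star N) := by simpa [hP.isSelfAdjoint.star_eq] using hN.1.star_star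
  have hPW' : Commute P (star W) := by simpa [hP.isSelfAdjoint.star_eq] using hW.1.star_star
  have hRN : P * R * P * star (P * N * P) = star (P * N * P) := by
    rw [hstar, corner_mul_corner hPP hR.1, ← hR'.isSelfAdjoint.star_eq, ← star_mul, hNR]
  have hTT : T * T = P - P * N * P * star (P * N * P) * (2 - P * N * P * star (P * N * P)) := by
    have hTV : T * star V = P * star W * P := by rw [← hstar, ← hVT, star_mul, hT.star_eq]
    calc T * T = T * star V * (V * T) := by
          rw [mul_assoc, ← mul_assoc (star V), Unitary.star_mul_self_of_mem hV, one_mul]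
      _ = P * (star W * W) * P := by rw [hVT, hTV, corner_mul_corner hPP hPW']
      _ = _ := by
        rw [hWW, hstar, corner_mul_corner hPP hN.1, corner_one_sub_mul_one_sub hPP
          (hN.1.mul_right hPN')]
  have hRR : IsIdempotentElem (P * R * P) := by
    rw [IsIdempotentElem, corner_mul_corner hPP hR.1, hR'.isIdempotentElem.eq]
  refine eq_zero_of_mul_eq_zero_of_corner hR.2 (mul_mem (mul_mem hR.2 hVE) hN.2) hRR
    (mul_polar_mul_eq_self (hPE V hVE) hV hT hVT hTT ?_ ?_ hRR) ?_ ?_ ?_ ?_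
  · rw [corner_mul_corner hPP hR.1, hRW, mul_zero, zero_mul]
  · rw [mul_assoc, hPP.eq]
  · rw [mul_assoc, corner_mul_corner hPP hN.1, hNR]
  · simp only [← mul_assoc (P * R * P), hRN]
  · rw [mul_assoc, corner_mul_corner hPP hN.1, hNK, mul_zero, zero_mul, mul_zero]
  · rw [corner_mul_corner hPP hR.1, hRK]

variable [PartialOrder A] [StarOrderedRing A] {B : StarSubalgebra ℂ A} {r : A}

theorem IsCentrallyLarge.mul_ne_zero_of_isometry (hl : IsCentrallyLarge B)
    (hs : IsSimpleCStarAlgebra A) (hinf : ¬FiniteDimensional ℂ A) (hB : IsClosed (B : Set A))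
    (hTR : TracialTopRankZeroIn B) (hrB : r ∈ B) (hr : IsStarProjection r) (hr0 : r ≠ 0) {u : A}
    (hu : star u * u = 1) : r * u ≠ 0 := by
  intro hru
  have : Nontrivial A := ⟨r, 0, hr0⟩
  obtain ⟨k₁, hk₁, k₂, hk₂, hk₁0, hk₂0, -, hk₂sa, hk₁k₂, hk₁r, hk₂r⟩ :=
    hl.exists_orthogonal_pair_corner hs hinf hB hrB hr hr0
  obtain ⟨g, N, hN, -, hgN, hgu, hguB, -⟩ := hl.exists_asymptotic_cutdown
    (Set.finite_singleton u) zero_le_one norm_one hk₁ hk₁0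
  rw [hgN] at hgu hguB
  have hNB : N ∈ sequencesInSubalgebra fun _ => B := sequencesIn_mono
    (fun _ => by rintro _ ⟨z, hz, rfl⟩; exact mul_mem hz hk₁) hN
  set W := (1 - N * star N) * const u
  have hWu : W = const u * (1 - N * star N) :=
    ((Commute.one_left (const u)).sub_left (hgu u rfl)).eq
  obtain ⟨E, _, -, P, -, hP, hPE, hPF, hPk, -⟩ := hTR.exists_asymptotic_corner
    (F := {W, N, const r}) (Set.toFinite _) (by
      rintro _ (rfl | rfl | rfl)
      exacts [hguB u rfl, hNB, const_mem_sequencesInSubalgebra hrB])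
    (hl.one_mem_idealSpan hs hB hk₂ hk₂0) (one_mem B) one_ne_zero
  refine hPk (corner_eq_zero_of_mul_eq_zero hP hPE (hPF W (by simp)) (hPF N (by simp))
    (hPF (const r) (by simp)) (hr.map const) ?_ ?_ ?_ ?_ ?_)
  · rw [hWu, star_mul, mul_assoc, ← mul_assoc _ (const u), ← map_star, ← map_mul, hu,
      map_one, one_mul, star_sub, star_one, star_mul, star_star]
  · rw [hWu, ← mul_assoc, ← map_mul, hru, map_zero, zero_mul]
  · exact mul_const_eq_self_of_mem_sequencesIn
      (by rintro _ _ ⟨z, -, rfl⟩; rw [mul_assoc, hk₁r]) hN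
  · exact mul_const_eq_zero_of_mem_sequencesIn
      (by rintro _ _ ⟨z, -, rfl⟩; rw [mul_assoc, hk₁k₂, mul_zero]) hN
  · rw [← map_mul, ← hk₂sa.star_eq, ← hr.isSelfAdjoint.star_eq, ← star_mul, hk₂r]

end ProperIsometry

section Annihilator

theorem exists_forall_isUnit_add_smul {Q : Type*} [Ring Q] [StarRing Q] [Algebra ℂ Q] {q r a y : Q}
    (hq : IsStarProjection q) (hr : IsStarProjection r) (hqr : q * r = 0) (hra : r * a = 0)
    (har : a * r = 0) (hsy : (1 - q - r) * y = y) (hyr : y * r = y) (hyy : y * star y = 1 - q - r)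
    {u : Qˣ} (hqu : Commute q u) :
    ∃ m, IsSelfAdjoint m ∧ ∀ ε : ℂ, ε ≠ 0 → IsUnit (a - q * a * q + q * u + ε • m) := by
  have hqq := hq.isIdempotentElem.eq
  have hrr := hr.isIdempotentElem.eq
  have hrq : r * q = 0 := by
    rw [← hq.isSelfAdjoint.star_eq, ← hr.isSelfAdjoint.star_eq, ← star_mul, hqr, star_zero]
  have hqu' : Commute q ↑u⁻¹ := hqu.units_inv_right
  set s := 1 - q - r with hs
  have hsproj : IsStarProjection s := by rw [hs, sub_sub]; exact (hq.add hr hqr).one_sub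
  have hsss := hsproj.isIdempotentElem.eq
  have hqs : q * s = 0 := by simp only [hs, mul_sub, mul_one, hqq, hqr, sub_self]
  have hsq : s * q = 0 := by simp only [hs, sub_mul, one_mul, hqq, hrq, sub_self]
  have hrs : r * s = 0 := by simp only [hs, mul_sub, mul_one, hrr, hrq, sub_zero, sub_self]
  have hsr : s * r = 0 := by simp only [hs, sub_mul, one_mul, hrr, hqr, sub_zero, sub_self]
  have hpeirce : a = (q + s) * a * (q + s) := by
    rw [hs, sub_right_comm, add_sub_cancel, sub_mul, one_mul, hra, sub_zero, mul_sub, mul_one, har,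
      sub_zero]
  refine ⟨r - star y * y + y + star y, ?_, fun ε hε => ?_⟩
  · rw [add_assoc]
    exact (hr.isSelfAdjoint.sub (.star_mul_self y)).add (.add_star_self y)
  rw [show a - q * a * q + q * u + ε • (r - star y * y + y + star y) =
      q * u + ε • (r - star y * y + y + star y) + q * a * s + s * a * q + s * a * s by
    nth_rw 1 [hpeirce]; simp only [add_mul, mul_add]; abel]
  refine isUnit_of_corner_coisometry (d' := q * ↑u⁻¹) hqr hrq hqs hsq hrs hsr hrr
    (by rw [hs]; abel) ?_ ?_ ?_ ?_ ?_ ?_ hsy hyr ?_ ?_ hyy ?_ ?_ ?_ ?_ ?_ ?_ hε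
  · rw [← mul_assoc, hqq]
  · rw [hqu.eq, mul_assoc, hqq]
  · rw [← mul_assoc, hqq]
  · rw [hqu'.eq, mul_assoc, hqq]
  · rw [hqu'.eq, mul_assoc, ← mul_assoc (u : Q), u.mul_inv, one_mul, hqq]
  · rw [hqu.eq, mul_assoc, ← mul_assoc (↑u⁻¹ : Q), u.inv_mul, one_mul, hqq]
  · rw [← hr.isSelfAdjoint.star_eq, ← star_mul, hyr]
  · rw [← hsproj.isSelfAdjoint.star_eq, ← star_mul, hsy]
  all_goals simp only [mul_assoc, hqq, hsss, ← mul_assoc q q, ← mul_assoc s s]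

theorem exists_corner_coisometry {Q : Type*} [Ring Q] [StarRing Q] {p r f S : Q}
    (hp : IsStarProjection p) (hr : IsStarProjection r) (hpr : Commute p r)
    (hf : IsStarProjection f) (hfp : f * (p * (1 - r)) = f) (hS : S * star S = 1 - p + f)
    (hSr : S * r = S) :
    IsStarProjection (p * (1 - r) - f) ∧ (p * (1 - r) - f) * r = 0 ∧
      p * (p * (1 - r) - f) = p * (1 - r) - f ∧
      ∃ y, (1 - (p * (1 - r) - f) - r) * y = y ∧ y * r = y ∧
        y * star y = 1 - (p * (1 - r) - f) - r := by
  have hp' : IsStarProjection (p * (1 - r)) :=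
    hp.mul hr.one_sub ((Commute.one_right p).sub_right hpr)
  have hr0 : p * (1 - r) * r = 0 := by rw [mul_assoc, hr.one_sub_mul_self, mul_zero]
  have hq := hf.sub_of_mul_eq_left hp' hfp
  have hqr : (p * (1 - r) - f) * r = 0 := by
    rw [sub_mul, hr0, ← hfp, mul_assoc f, hr0, mul_zero, sub_zero]
  have hpf : p * (1 - r) * f = f := by
    simpa [hp'.isSelfAdjoint.star_eq, hf.isSelfAdjoint.star_eq] using congrArg star hfp
  refine ⟨hq, hqr, ?_, ?_⟩
  · rw [mul_sub, ← mul_assoc, hp.isIdempotentElem.eq, ← hpf, ← mul_assoc, ← mul_assoc,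
      hp.isIdempotentElem.eq]
  set q := p * (1 - r) - f
  have hs : IsStarProjection (1 - q - r) := by
    rw [sub_sub]; exact (hq.add hr hqr).one_sub
  have hsr : (1 - q - r) * r = 0 := by
    rw [sub_mul, sub_mul, one_mul, hqr, hr.isIdempotentElem.eq, sub_zero, sub_self]
  have hss := hs.isIdempotentElem.eq
  have hSs : S * star S = 1 - q - r + r * (1 - p) := by
    rw [hS, mul_sub, ← hpr.eq]; simp only [q, mul_sub, mul_one]; abel
  refine ⟨(1 - q - r) * S, by rw [← mul_assoc, hss], by rw [mul_assoc, hSr], ?_⟩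
  rw [star_mul, hs.isSelfAdjoint.star_eq, mul_assoc, ← mul_assoc S, hSs, add_mul, mul_add,
    ← mul_assoc _ (r * _), ← mul_assoc _ r, hsr, zero_mul, zero_mul, add_zero, hss, hss]

variable {A : Type*} [CStarAlgebra A] [PartialOrder A] [StarOrderedRing A]

theorem exists_asymptotic_coisometry {E : ℕ → StarSubalgebra ℂ A}
    [∀ n, FiniteDimensional ℂ (E n)] {P N : AsymptoticAlgebra A} (hP : IsStarProjection P)
    (hPN : Commute P (N * star N)) (hPE : P * (N * star N) ∈ sequencesInSubalgebra E) {t : ℝ}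
    (ht : 0 < t) :
    ∃ F ∈ sequencesInSubalgebra E, IsStarProjection F ∧ F * P = F ∧
      P * (N * star N) - F * (N * star N) ∈ sequencesIn (fun _ => Metric.closedBall 0 t) ∧
      ∃ D, D * N * star (D * N) = F := by
  have hT : P * N * star (P * N) = P * (N * star N) := by
    rw [star_mul, hP.isSelfAdjoint.star_eq, ← mul_assoc, mul_assoc P N, hPN.eq, mul_assoc,
      hP.isIdempotentElem.eq, ← hPN.eq]
  have hT0 : P * (N * star N) ∈ sequencesIn fun _ => Set.Ici 0 := by
    obtain ⟨x, hx⟩ := ofSeq_surjective (P * N)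
    rw [← hT, ← hx, ← map_star, ← map_mul]
    exact ofSeq_mem_sequencesIn fun n => mul_star_self_nonneg (x n)
  obtain ⟨F, hF, K, -, hF', hKsa, hKF, hTK, hTF⟩ :=
    exists_asymptotic_cutoff (mem_sequencesIn_nonneg hPE hT0) ht
  have hTP : P * (N * star N) * P = P * (N * star N) := by
    rw [hPN.eq, mul_assoc, hP.isIdempotentElem.eq]
  have hFP : F * P = F := by rw [← hKF, mul_assoc K, hTK, mul_assoc, mul_assoc, hTP]
  refine ⟨F, hF, hF', hFP, ?_, K * P, ?_⟩
  · rwa [← mul_assoc F, hFP] at hTF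
  · rw [mul_assoc K, star_mul K, hKsa.star_eq, mul_assoc K, ← mul_assoc (P * N), hT,
      ← mul_assoc, hKF]

theorem exists_asymptotic_corner_coisometry {E : ℕ → StarSubalgebra ℂ A}
    [∀ n, FiniteDimensional ℂ (E n)] {P N R S : AsymptoticAlgebra A}
    (hPE : P ∈ sequencesInSubalgebra E) (hP : IsStarProjection P)
    (hN : Commute P N ∧ P * N * P ∈ sequencesInSubalgebra E)
    (hR : Commute P R ∧ P * R * P ∈ sequencesInSubalgebra E) (hR' : IsStarProjection R)
    (hRN : Commute R (N * star N)) (hNR : N * R = N) (hSP : S * star S = 1 - P) (hSR : S * R = S)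
    (hSN : S * star N = 0) {t : ℝ} (ht : 0 < t) :
    ∃ q ∈ sequencesInSubalgebra E, IsStarProjection q ∧ q * R = 0 ∧ P * q = q ∧
      q * (N * star N) ∈ sequencesIn (fun _ => Metric.closedBall 0 t) ∧
      ∃ y, (1 - q - R) * y = y ∧ y * R = y ∧ y * star y = 1 - q - R := by
  have hPN' : Commute P (star N) := by simpa [hP.isSelfAdjoint.star_eq] using hN.1.star_star
  have hP' : IsStarProjection (P * (1 - R)) :=
    hP.mul hR'.one_sub ((Commute.one_right P).sub_right hR.1)
  have hP'E : P * (1 - R) ∈ sequencesInSubalgebra E := by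
    have : P * R * P = P * R := by rw [hR.1.eq, mul_assoc, hP.isIdempotentElem.eq]
    rw [mul_sub, mul_one, ← this]
    exact sub_mem hPE hR.2
  have hGE : P * (1 - R) * (N * star N) ∈ sequencesInSubalgebra E := by
    have : P * (1 - R) * (N * star N) = P * (1 - R) * (P * N * P * star (P * N * P)) := by
      have hPP' : P * (1 - R) * P = P * (1 - R) := by
        rw [mul_assoc, ← ((Commute.one_right P).sub_right hR.1).eq, ← mul_assoc,
          hP.isIdempotentElem.eq]
      rw [star_mul, star_mul, hP.isSelfAdjoint.star_eq, ← mul_assoc P,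
        corner_mul_corner hP.isIdempotentElem hN.1, (hN.1.mul_right hPN').eq, mul_assoc _ P,
        hP.isIdempotentElem.eq, ← (hN.1.mul_right hPN').eq, ← mul_assoc _ P, hPP']
    rw [this]
    exact mul_mem hP'E (mul_mem hN.2 (star_mem hN.2))
  obtain ⟨F, hF, hF', hFP, hFN, D, hD⟩ := exists_asymptotic_coisometry hP'
    ((hN.1.mul_right hPN').mul_left ((Commute.one_left _).sub_left hRN)) hGE ht
  have hS : (S + D * N) * star (S + D * N) = 1 - P + F := by
    have hSD : S * star (D * N) = 0 := by rw [star_mul, ← mul_assoc, hSN, zero_mul]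
    have hDS : D * N * star S = 0 := by simpa using congrArg star hSD
    rw [star_add, mul_add, add_mul, add_mul, hSP, hSD, hDS, hD, zero_add, add_zero]
  obtain ⟨hq, hqR, hPq, hy⟩ := exists_corner_coisometry hP hR' hR.1 hF' hFP hS (by
    rw [add_mul, mul_assoc, hNR, hSR])
  exact ⟨_, sub_mem hP'E hF, hq, hqR, hPq, by rwa [sub_mul], hy⟩

theorem sub_corner_add_corner_add_sub {Q : Type*} [Ring Q] {q : Q} (hq : IsIdempotentElem q)
    (a g u m : Q) : a - q * a * q + q * u + m - a =
      q * g * -a * q + q * (u - q * ((1 - g) * a) * q) + m := by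
  have hqaq : q * a * q = q * ((1 - g) * a) * q + q * g * a * q := by
    rw [mul_assoc q g, ← add_mul, ← mul_add, sub_mul, one_mul, sub_add_cancel]
  rw [mul_sub, ← mul_assoc q, ← mul_assoc q, hq.eq, hqaq, mul_neg, neg_mul]
  abel

theorem exists_isUnit_near_const {E : ℕ → StarSubalgebra ℂ A} [∀ n, FiniteDimensional ℂ (E n)]
    {q G R y : AsymptoticAlgebra A} {a : A} (hqE : q ∈ sequencesInSubalgebra E)
    (hq : IsStarProjection q) (hR : IsStarProjection R) (hqR : q * R = 0) (hRa : R * const a = 0)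
    (haR : const a * R = 0) (hsy : (1 - q - R) * y = y) (hyR : y * R = y)
    (hyy : y * star y = 1 - q - R) (hG : IsSelfAdjoint G) (hGa : Commute G (const a))
    (hE : q * ((1 - G) * const a) * q ∈ sequencesInSubalgebra E) {t θ : ℝ}
    (hqG : q * G ∈ sequencesIn fun _ => Metric.closedBall 0 t) (hθ : 0 < θ) :
    ∃ X, IsUnit X ∧ (IsSelfAdjoint a → IsSelfAdjoint X) ∧
      X - const a ∈ sequencesIn fun _ => Metric.closedBall 0 (t * ‖a‖ + 2 * θ + θ) := by
  have hqq := hq.isIdempotentElem.eq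
  set W := (1 - G) * const a
  have hqW : Commute q (q * W * q) := by
    rw [commute_iff_eq, ← mul_assoc, ← mul_assoc, hqq, mul_assoc _ q q, hqq]
  obtain ⟨U, hqU, hUsa, hU⟩ := exists_isUnit_near hE hqE hq hqW hθ
  obtain ⟨m, hm, hunit⟩ := exists_forall_isUnit_add_smul hq hR hqR hRa haR hsy hyR hyy hqU
  obtain ⟨c, hc, hcm⟩ := exists_smul_mem_sequencesIn_closedBall m hθ
  have hqball : q ∈ sequencesIn fun _ => Metric.closedBall 0 1 :=
    sequencesIn_mono (fun _ p hp => mem_closedBall_zero_iff.2 (IsStarProjection.norm_le p hp.2))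
      (mem_sequencesIn_isStarProjection hqE hq)
  refine ⟨_, hunit c (Complex.ofReal_ne_zero.2 hc.ne'), fun ha => ?_, ?_⟩
  · have haA := ha.map const
    have hWsa : IsSelfAdjoint W :=
      ((IsSelfAdjoint.one _).sub hG).commute_iff haA |>.1 ((Commute.one_left _).sub_left hGa)
    have hqXq {X : AsymptoticAlgebra A} (hX : IsSelfAdjoint X) : IsSelfAdjoint (q * X * q) :=
      hX.conjugate_self hq.isSelfAdjoint
    exact ((haA.sub (hqXq haA)).add ((hq.isSelfAdjoint.commute_iff (hUsa (hqXq hWsa))).1 hqU)).add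
      (.smul (Complex.conj_ofReal c) hm)
  · have hGaq := mul_mem_sequencesIn_closedBall (mul_mem_sequencesIn_closedBall hqG
      (const_mem_sequencesIn fun _ => mem_closedBall_zero_iff.2 (norm_neg a).le)) hqball
    have hqUW := mul_mem_sequencesIn_closedBall hqball hU
    rw [mul_one] at hGaq
    rw [one_mul] at hqUW
    rw [sub_corner_add_corner_add_sub hq.isIdempotentElem (const a) G, ← map_neg]
    exact add_mem_sequencesIn_closedBall (add_mem_sequencesIn_closedBall hGaq hqUW) hcm

theorem mul_mul_mem_of_corner_mem {Q : Type*} [Ring Q] [StarRing Q] [Algebra ℂ Q]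
    [StarModule ℂ Q] {E : StarSubalgebra ℂ Q} {p q x : Q} (hp : IsStarProjection p)
    (hq : IsStarProjection q) (hpq : p * q = q) (hqE : q ∈ E) (hx : p * x * p ∈ E) :
    q * x * q ∈ E := by
  have hqp : q * p = q := by
    rw [← hq.isSelfAdjoint.star_eq, ← hp.isSelfAdjoint.star_eq, ← star_mul, hpq]
  have : q * x * q = q * (p * x * p) * q := by
    rw [← mul_assoc, ← mul_assoc, hqp, mul_assoc (q * x), hpq]
  exact this ▸ mul_mem (mul_mem hqE hx) hqE

variable {B : StarSubalgebra ℂ A}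

theorem IsCentrallyLarge.exists_asymptotic_isUnit_near (hl : IsCentrallyLarge B)
    (hs : IsSimpleCStarAlgebra A) (hinf : ¬FiniteDimensional ℂ A) (hB : IsClosed (B : Set A))
    (hTR : TracialTopRankZeroIn B) {r : A} (hrB : r ∈ B) (hr : IsStarProjection r) (hr0 : r ≠ 0)
    {a : A} (hra : r * a = 0) (har : a * r = 0) {θ : ℝ} (hθ : 0 < θ) :
    ∃ X, IsUnit X ∧ (IsSelfAdjoint a → IsSelfAdjoint X) ∧
      X - const a ∈ sequencesIn fun _ => Metric.closedBall 0 θ := by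
  have : Nontrivial A := ⟨r, 0, hr0⟩
  obtain ⟨k₁, hk₁, k₂, hk₂, hk₁0, hk₂0, -, hk₂sa, hk₁k₂, hk₁r, hk₂r⟩ :=
    hl.exists_orthogonal_pair_corner hs hinf hB hrB hr hr0
  obtain ⟨g, N, hN, -, hgN, hga, hgaB, -⟩ := hl.exists_asymptotic_cutdown
    (F := {a, r}) (Set.toFinite _) zero_le_one norm_one hk₂ hk₂0
  rw [hgN] at hga hgaB
  have hNB : N ∈ sequencesInSubalgebra fun _ => B := sequencesIn_mono
    (fun _ => by rintro _ ⟨z, hz, rfl⟩; exact mul_mem hz hk₂) hN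
  set W := (1 - N * star N) * const a
  obtain ⟨E, _, -, P, hPE, hP, -, hPF, -, S, hS, hSP⟩ := hTR.exists_asymptotic_corner
    (F := {W, N, const r}) (Set.toFinite _) (by
      rintro _ (rfl | rfl | rfl)
      exacts [hgaB a (by simp), hNB, const_mem_sequencesInSubalgebra hrB])
    (hl.one_mem_idealSpan hs hB hk₂ hk₂0) hk₁ hk₁0
  have hSN : S * star N = 0 := mul_star_eq_zero_of_mem_sequencesIn (by
    rintro _ _ ⟨z, -, rfl⟩ _ ⟨w, -, rfl⟩
    rw [star_mul, hk₂sa.star_eq, mul_assoc, ← mul_assoc k₁, hk₁k₂, zero_mul, mul_zero]) hS hN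
  have hNr : N * const r = N := mul_const_eq_self_of_mem_sequencesIn
    (by rintro _ _ ⟨z, -, rfl⟩; rw [mul_assoc, hk₂r]) hN
  have hSr : S * const r = S := mul_const_eq_self_of_mem_sequencesIn
    (by rintro _ _ ⟨z, -, rfl⟩; rw [mul_assoc, hk₁r]) hS
  have ht : 0 < θ / (2 * (‖a‖ + 1)) := by positivity
  obtain ⟨q, hqE, hq, hqr, hPq, hqG, y, hsy, hyr, hyy⟩ :=
    exists_asymptotic_corner_coisometry hPE hP (hPF N (by simp)) (hPF (const r) (by simp))
      (hr.map const) (hga r (by simp)).symm hNr hSP hSr hSN ht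
  obtain ⟨X, hX, hXsa, hXa⟩ := exists_isUnit_near_const (θ := θ / 6) hqE hq (hr.map const) hqr
    (by rw [← map_mul, hra, map_zero]) (by rw [← map_mul, har, map_zero]) hsy hyr hyy
    (.mul_star_self N) (hga a (by simp))
    (mul_mul_mem_of_corner_mem hP hq hPq hqE (hPF W (by simp)).2) hqG (by positivity)
  refine ⟨X, hX, hXsa, sequencesIn_mono (fun _ => Metric.closedBall_subset_closedBall ?_) hXa⟩
  have : θ / (2 * (‖a‖ + 1)) * ‖a‖ ≤ θ / 2 := by
    rw [div_mul_eq_mul_div, div_le_div_iff₀ (by positivity) two_pos]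
    nlinarith [norm_nonneg a]
  linarith

end Annihilator

section Density

variable {A : Type*} [CStarAlgebra A] {r a b : A}

theorem mem_closure_of_forall_norm_sub_le {E : Type*} [SeminormedAddCommGroup E] {S : Set E} {a : E}
    (h : ∀ ε > 0, ∃ b ∈ closure S, ‖b - a‖ ≤ ε) : a ∈ closure S := by
  rw [← closure_closure, Metric.mem_closure_iff]
  intro ε hε
  obtain ⟨b, hb, hba⟩ := h (ε / 2) (half_pos hε)
  exact ⟨b, hb, (dist_comm a b).trans_lt <|
    (dist_eq_norm b a).trans_lt <| hba.trans_lt <| half_lt_self hε⟩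

theorem norm_compress_sub_le (hr : IsStarProjection r) {θ : ℝ} (hrb : ‖r * b‖ ≤ θ)
    (hbr : ‖b * r‖ ≤ θ) : ‖(1 - r) * b * (1 - r) - b‖ ≤ 2 * θ := by
  have : (1 - r) * b * (1 - r) - b = -((1 - r) * (b * r) + r * b) := by noncomm_ring
  rw [this, norm_neg, two_mul]
  refine norm_add_le_of_le ?_ hrb
  simpa using norm_mul_le_of_le (IsStarProjection.norm_le _ hr.one_sub) hbr

theorem div_norm_add_one_mul_norm_le {E : Type*} [SeminormedAddGroup E] (a : E) {θ : ℝ}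
    (hθ : 0 ≤ θ) : θ / (‖a‖ + 1) * ‖a‖ ≤ θ := by
  rw [div_mul_eq_mul_div, div_le_iff₀ (by positivity)]
  gcongr
  exact le_add_of_nonneg_right zero_le_one

theorem norm_mul_le_of_mul_eq_zero_left {Q : Type*} [NonUnitalSeminormedRing Q] {r k a m : Q}
    {θ : ℝ} (hθ : 0 ≤ θ) (hka : k * a = 0) (h : ‖r - m * k‖ ≤ θ / (‖a‖ + 1)) : ‖r * a‖ ≤ θ := by
  have : r * a = (r - m * k) * a := by rw [sub_mul, mul_assoc, hka, mul_zero, sub_zero]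
  rw [this]
  exact (norm_mul_le_of_le h le_rfl).trans (div_norm_add_one_mul_norm_le a hθ)

theorem norm_mul_le_of_mul_eq_zero_right {Q : Type*} [NonUnitalSeminormedRing Q] {r k a m : Q}
    {θ : ℝ} (hθ : 0 ≤ θ) (hak : a * k = 0) (h : ‖r - k * m‖ ≤ θ / (‖a‖ + 1)) : ‖a * r‖ ≤ θ := by
  have : a * r = a * (r - k * m) := by rw [mul_sub, ← mul_assoc, hak, zero_mul, sub_zero]
  rw [this]
  exact (norm_mul_le_of_le le_rfl h).trans
    ((mul_comm _ _).trans_le (div_norm_add_one_mul_norm_le a hθ))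

theorem isUnit_of_isUnit_mul_of_isUnit_mul_swap {M : Type*} [Monoid M] {x y : M}
    (hxy : IsUnit (x * y)) (hyx : IsUnit (y * x)) : IsUnit x := by
  obtain ⟨u, hu⟩ := hxy.exists_right_inv
  obtain ⟨v, hv⟩ := hyx.exists_left_inv
  exact isUnit_iff_exists_and_exists.2
    ⟨⟨y * u, (mul_assoc ..).symm.trans hu⟩, v * y, (mul_assoc ..).trans hv⟩

variable [PartialOrder A] [StarOrderedRing A] {B : StarSubalgebra ℂ A}

theorem IsCentrallyLarge.mem_closure_isUnit_of_isStarProjection (hl : IsCentrallyLarge B)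
    (hs : IsSimpleCStarAlgebra A) (hinf : ¬FiniteDimensional ℂ A) (hB : IsClosed (B : Set A))
    (hTR : TracialTopRankZeroIn B) (hrB : r ∈ B) (hr : IsStarProjection r) (hr0 : r ≠ 0)
    (hra : r * a = 0) (har : a * r = 0) : a ∈ closure {x : A | IsUnit x} :=
  mem_closure_of_forall_norm_sub_le fun _ hε =>
    let ⟨_, hX, _, hXa⟩ := hl.exists_asymptotic_isUnit_near hs hinf hB hTR hrB hr hr0 hra har hε
    let ⟨x, hx, hxa⟩ := exists_isUnit_norm_sub_le hX hXa
    ⟨x, subset_closure hx, hxa⟩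

theorem IsCentrallyLarge.mem_closure_isSelfAdjoint_isUnit_of_isStarProjection
    (hl : IsCentrallyLarge B) (hs : IsSimpleCStarAlgebra A) (hinf : ¬FiniteDimensional ℂ A)
    (hB : IsClosed (B : Set A)) (hTR : TracialTopRankZeroIn B) (hrB : r ∈ B)
    (hr : IsStarProjection r) (hr0 : r ≠ 0) (hra : r * a = 0) (ha : IsSelfAdjoint a) :
    a ∈ closure {x : A | IsSelfAdjoint x ∧ IsUnit x} := by
  have har : a * r = 0 := by
    rw [← ha.star_eq, ← hr.isSelfAdjoint.star_eq, ← star_mul, hra, star_zero]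
  refine mem_closure_of_forall_norm_sub_le fun _ hε => ?_
  obtain ⟨X, hX, hXsa, hXa⟩ :=
    hl.exists_asymptotic_isUnit_near hs hinf hB hTR hrB hr hr0 hra har hε
  obtain ⟨x, hx, hxa⟩ := exists_isSelfAdjoint_isUnit_norm_sub_le ha hX (hXsa ha) hXa
  exact ⟨x, subset_closure hx, hxa⟩

theorem IsCentrallyLarge.mem_closure_isUnit_of_mul_eq_zero (hl : IsCentrallyLarge B)
    (hs : IsSimpleCStarAlgebra A) (hinf : ¬FiniteDimensional ℂ A) (hB : IsClosed (B : Set A))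
    (hTR : TracialTopRankZeroIn B) {k : A} (hk : k ∈ B) (hk0 : k ≠ 0) (hka : k * a = 0)
    (hak : a * k = 0) : a ∈ closure {x : A | IsUnit x} := by
  refine mem_closure_of_forall_norm_sub_le fun ε hε => ?_
  have hθ : 0 < ε / 2 / (‖a‖ + 1) := by positivity
  obtain ⟨r, hrB, hr, hr0, ⟨m, hm⟩, v, hv, m', hm'⟩ :=
    exists_isStarProjection_near_factor hTR hk (hl.one_mem_idealSpan hs hB hk hk0) hk0 hθ
  have hrb : ‖r * (a * v)‖ ≤ ε / 2 := by
    rw [← mul_assoc, CStarRing.norm_mul_mem_unitary _ hv]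
    exact norm_mul_le_of_mul_eq_zero_left (half_pos hε).le hka hm
  have hbr : ‖a * v * r‖ ≤ ε / 2 := by
    rw [mul_assoc]
    exact norm_mul_le_of_mul_eq_zero_right (half_pos hε).le hak hm'
  have hc := hl.mem_closure_isUnit_of_isStarProjection hs hinf hB hTR hrB hr hr0
    (a := (1 - r) * (a * v) * (1 - r))
    (by rw [← mul_assoc, ← mul_assoc, hr.mul_one_sub_self, zero_mul, zero_mul])
    (by rw [mul_assoc, hr.one_sub_mul_self, mul_zero])
  refine ⟨(1 - r) * (a * v) * (1 - r) * star v, ?_, ?_⟩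
  · refine map_mem_closure (f := (· * star v)) (by fun_prop) hc fun x hx => ?_
    exact hx.mul (Unitary.isUnit_coe (U := ⟨star v, Unitary.star_mem hv⟩))
  · rw [← CStarRing.norm_mul_mem_unitary _ hv, sub_mul, mul_assoc _ (star v),
      Unitary.star_mul_self_of_mem hv, mul_one]
    exact (norm_compress_sub_le hr hrb hbr).trans_eq (mul_div_cancel₀ ε two_ne_zero)

theorem IsCentrallyLarge.mem_closure_isSelfAdjoint_isUnit_of_mul_eq_zero (hl : IsCentrallyLarge B)
    (hs : IsSimpleCStarAlgebra A) (hinf : ¬FiniteDimensional ℂ A) (hB : IsClosed (B : Set A))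
    (hTR : TracialTopRankZeroIn B) {k : A} (hk : k ∈ B) (hk0 : k ≠ 0) (hka : k * a = 0)
    (ha : IsSelfAdjoint a) : a ∈ closure {x : A | IsSelfAdjoint x ∧ IsUnit x} := by
  refine mem_closure_of_forall_norm_sub_le fun ε hε => ?_
  have hθ : 0 < ε / 2 / (‖a‖ + 1) := by positivity
  obtain ⟨r, hrB, hr, hr0, ⟨m, hm⟩, -⟩ :=
    exists_isStarProjection_near_factor hTR hk (hl.one_mem_idealSpan hs hB hk hk0) hk0 hθ
  have hra : ‖r * a‖ ≤ ε / 2 := norm_mul_le_of_mul_eq_zero_left (half_pos hε).le hka hm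
  have har : ‖a * r‖ ≤ ε / 2 := by
    rwa [← norm_star, star_mul, ha.star_eq, hr.isSelfAdjoint.star_eq]
  refine ⟨(1 - r) * a * (1 - r), hl.mem_closure_isSelfAdjoint_isUnit_of_isStarProjection hs hinf hB
    hTR hrB hr hr0 ?_ (ha.conjugate_self hr.one_sub.isSelfAdjoint), ?_⟩
  · rw [← mul_assoc, ← mul_assoc, hr.mul_one_sub_self, zero_mul, zero_mul]
  · exact (norm_compress_sub_le hr hra har).trans_eq (mul_div_cancel₀ ε two_ne_zero)

theorem exists_isometry_mul_right (ha : IsUnit (star a * a)) :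
    ∃ b : A, star (a * b) * (a * b) = 1 := by
  have hpos : IsStrictlyPositive (star a * a) := ha.isStrictlyPositive (star_mul_self_nonneg a)
  have hsa : IsSelfAdjoint ((star a * a) ^ (-(1 / 2) : ℝ)) := .of_nonneg CFC.rpow_nonneg
  refine ⟨(star a * a) ^ (-(1 / 2) : ℝ), ?_⟩
  rw [star_mul, hsa.star_eq, ← CFC.conjugate_rpow_neg_one_half (star a * a)]
  simp only [mul_assoc]

theorem IsCentrallyLarge.not_isUnit_star_mul_self_of_mul_eq_zero (hl : IsCentrallyLarge B)
    (hs : IsSimpleCStarAlgebra A) (hinf : ¬FiniteDimensional ℂ A) (hB : IsClosed (B : Set A))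
    (hTR : TracialTopRankZeroIn B) (hrB : r ∈ B) (hr : IsStarProjection r) (hr0 : r ≠ 0)
    (hra : r * a = 0) : ¬IsUnit (star a * a) := fun ha =>
  let ⟨b, hab⟩ := exists_isometry_mul_right ha
  hl.mul_ne_zero_of_isometry hs hinf hB hTR hrB hr hr0 hab (by rw [← mul_assoc, hra, zero_mul])

theorem IsCentrallyLarge.mem_closure_isUnit_of_isStarProjection_mul_eq_zero
    (hl : IsCentrallyLarge B) (hs : IsSimpleCStarAlgebra A) (hinf : ¬FiniteDimensional ℂ A)
    (hB : IsClosed (B : Set A)) (hTR : TracialTopRankZeroIn B) (hrB : r ∈ B)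
    (hr : IsStarProjection r) (hr0 : r ≠ 0) (hra : r * a = 0) : a ∈ closure {x : A | IsUnit x} := by
  refine mem_closure_of_forall_norm_sub_le fun ε hε => ?_
  have ha : ¬IsUnit (star a * star (star a)) := by
    rw [star_star]
    exact hl.not_isUnit_star_mul_self_of_mul_eq_zero hs hinf hB hTR hrB hr hr0 hra
  obtain ⟨k, hk, hk0, n, hn, -, -, hnk, hna⟩ := hl.exists_mul_eq_zero_norm_mul_sub_le hB ha hε
  obtain ⟨x, hx, hkxr⟩ := exists_mul_mul_ne_zero (hl.one_mem_idealSpan hs hB hrB hr0) hk0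
  refine ⟨a * n, hl.mem_closure_isUnit_of_mul_eq_zero hs hinf hB hTR
    (mul_mem (mul_mem hk hx) hrB) hkxr ?_ ?_, ?_⟩
  · rw [mul_assoc, ← mul_assoc r, hra, zero_mul, mul_zero]
  · rw [mul_assoc k, mul_assoc, ← mul_assoc n, hnk, zero_mul, mul_zero]
  · rwa [← norm_star, star_sub, star_mul, hn.star_eq]

theorem IsCentrallyLarge.mem_closure_isUnit_of_left_mul_eq_zero (hl : IsCentrallyLarge B)
    (hs : IsSimpleCStarAlgebra A) (hinf : ¬FiniteDimensional ℂ A) (hB : IsClosed (B : Set A))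
    (hTR : TracialTopRankZeroIn B) {k : A} (hk : k ∈ B) (hk0 : k ≠ 0) (hka : k * a = 0) :
    a ∈ closure {x : A | IsUnit x} := by
  refine mem_closure_of_forall_norm_sub_le fun ε hε => ?_
  obtain ⟨r, hrB, hr, hr0, ⟨m, hm⟩, -⟩ :=
    exists_isStarProjection_near_factor hTR hk (hl.one_mem_idealSpan hs hB hk hk0) hk0
      (show 0 < ε / (‖a‖ + 1) by positivity)
  refine ⟨(1 - r) * a, hl.mem_closure_isUnit_of_isStarProjection_mul_eq_zero hs hinf hB hTR
    hrB hr hr0 ?_, ?_⟩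
  · rw [← mul_assoc, hr.mul_one_sub_self, zero_mul]
  · rw [sub_mul, one_mul, sub_sub_cancel_left, norm_neg]
    exact norm_mul_le_of_mul_eq_zero_left hε.le hka hm

theorem IsCentrallyLarge.mem_closure_isUnit_of_not_isUnit_mul_star_self (hl : IsCentrallyLarge B)
    (hs : IsSimpleCStarAlgebra A) (hinf : ¬FiniteDimensional ℂ A) (hB : IsClosed (B : Set A))
    (hTR : TracialTopRankZeroIn B) (ha : ¬IsUnit (a * star a)) :
    a ∈ closure {x : A | IsUnit x} := by
  refine mem_closure_of_forall_norm_sub_le fun ε hε => ?_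
  obtain ⟨k, hk, hk0, n, -, -, hkn, -, hna⟩ := hl.exists_mul_eq_zero_norm_mul_sub_le hB ha hε
  exact ⟨n * a, hl.mem_closure_isUnit_of_left_mul_eq_zero hs hinf hB hTR hk hk0
    (by rw [← mul_assoc, hkn, zero_mul]), hna⟩

theorem IsCentrallyLarge.mem_closure_isSelfAdjoint_isUnit (hl : IsCentrallyLarge B)
    (hs : IsSimpleCStarAlgebra A) (hinf : ¬FiniteDimensional ℂ A) (hB : IsClosed (B : Set A))
    (hTR : TracialTopRankZeroIn B) (ha : IsSelfAdjoint a) :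
    a ∈ closure {x : A | IsSelfAdjoint x ∧ IsUnit x} := by
  by_cases hu : IsUnit a
  · exact subset_closure ⟨ha, hu⟩
  have hu' : ¬IsUnit (a * star a) := by
    rwa [ha.star_eq, (Commute.refl a).isUnit_mul_iff, and_self]
  refine mem_closure_of_forall_norm_sub_le fun ε hε => ?_
  obtain ⟨k, hk, hk0, n, hn, hn1, hkn, -, hna⟩ :=
    hl.exists_mul_eq_zero_norm_mul_sub_le hB hu' (half_pos hε)
  have han : ‖a * n - a‖ ≤ ε / 2 := by
    rwa [← norm_star, star_sub, star_mul, ha.star_eq, hn.star_eq]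
  refine ⟨n * a * n, hl.mem_closure_isSelfAdjoint_isUnit_of_mul_eq_zero hs hinf hB hTR hk hk0 ?_
    (ha.conjugate_self hn), ?_⟩
  · rw [← mul_assoc, ← mul_assoc, hkn, zero_mul, zero_mul]
  · calc ‖n * a * n - a‖ = ‖n * (a * n - a) + (n * a - a)‖ := by congr 1; noncomm_ring
      _ ≤ 1 * (ε / 2) + ε / 2 := norm_add_le_of_le (norm_mul_le_of_le hn1 han) hna
      _ = ε := by ring

end Density

/-- If `A` is an infinite-dimensional unital simple C*-algebra and `B ⊆ A` is a
centrally large subalgebra with tracial topological rank zero, then `A` has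
stable rank one (the invertible elements are dense in `A`) and real rank zero
(the invertible self-adjoint elements are dense in the self-adjoint
elements). -/
theorem stableRankOne_and_realRankZero_of_centrallyLarge_trZero
    {A : Type*} [CStarAlgebra A] [PartialOrder A] [StarOrderedRing A]
    (hsimple : IsSimpleCStarAlgebra A)
    (hinfdim : ¬ FiniteDimensional ℂ A)
    (B : StarSubalgebra ℂ A) (hBclosed : IsClosed (B : Set A))
    (hlarge : IsCentrallyLarge B)
    (hTR : TracialTopRankZeroIn B) :
    Dense {x : A | IsUnit x} ∧
    (∀ a : A, IsSelfAdjoint a →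
      a ∈ closure {x : A | IsSelfAdjoint x ∧ IsUnit x}) := by
  have mem_closure {a : A} (ha : ¬IsUnit (a * star a)) : a ∈ closure {x : A | IsUnit x} :=
    hlarge.mem_closure_isUnit_of_not_isUnit_mul_star_self hsimple hinfdim hBclosed hTR ha
  refine ⟨fun a => ?_, fun a ha =>
    hlarge.mem_closure_isSelfAdjoint_isUnit hsimple hinfdim hBclosed hTR ha⟩
  by_cases hr : IsUnit (a * star a)
  · by_cases hl : IsUnit (star a * a)
    · exact subset_closure (isUnit_of_isUnit_mul_of_isUnit_mul_swap hr hl)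
    · rw [← star_star a]
      exact map_mem_closure continuous_star (mem_closure (by rwa [star_star])) fun _ => IsUnit.star
  · exact mem_closure hr
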